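/- arXiv:2401.06083 — 2 statements merged into one kernel-verified Lean document; each statement's English description precedes it below -/
import Mathlib

section
/- (Zygmund–Bonami inequality of order τ) Let τ be a positive integer and f ∈ L log^{τ/2}L([0,1]). Then (Σ_{λ ∈ lac_τ, |λ's associated interval length| ≥ 1} |f̂(λ)|²)^{1/2} ≲_τ ‖f‖_{L log^{τ/2}L}, where f̂(λ) = ∫_{[0,1]} f(x) e^{−2πiλx} dx. -/
open MeasureTheory Real Set

noncomputable section

/-- The Young function `B_σ(t) = t (log(e + t))^σ`. -/
noncomputable def Bfun (σ t : ℝ) : ℝ := t * (Real.log (Real.exp 1 + t)) ^ σ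

/-- An interval, represented by its pair of endpoints, is dyadic. -/
def IsDyadicI (p : ℝ × ℝ) : Prop := ∃ k n : ℤ, p.1 = n * (2:ℝ)^k ∧ p.2 = (n+1) * (2:ℝ)^k

/-- The Whitney partition of the interval `I = [I.1, I.2)`: the maximal dyadic subintervals
`L ⊆ I` with `dist(L, ℝ \ I) = |L|`. -/
def WhitneyP (I : ℝ × ℝ) : Set (ℝ × ℝ) :=
  {L | IsDyadicI L ∧ I.1 ≤ L.1 ∧ L.2 ≤ I.2 ∧
       min (L.1 - I.1) (I.2 - L.2) = L.2 - L.1 ∧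
       ∀ L' : ℝ × ℝ, IsDyadicI L' → I.1 ≤ L'.1 → L'.2 ≤ I.2 →
         min (L'.1 - I.1) (I.2 - L'.2) = L'.2 - L'.1 →
         L'.1 ≤ L.1 → L.2 ≤ L'.2 → L = L'}

/-- The standard Littlewood–Paley collection of intervals of order `τ`:
`Λ₁ = {±[2^k, 2^(k+1))}`, and `Λ_(τ+1) = ⋃_{I ∈ Λ_τ} W(I)`. -/
def Lambda : ℕ → Set (ℝ × ℝ)
  | 0 => ∅
  | 1 => {p | ∃ k : ℤ, p = ((2:ℝ)^k, (2:ℝ)^(k+1)) ∨ p = (-(2:ℝ)^(k+1), -(2:ℝ)^k)}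
  | (n+2) => ⋃ I ∈ Lambda (n+1), WhitneyP I

/-- The set of endpoints of intervals of `Λ_τ` (with `lac_0 = {0}`). -/
def lac (τ : ℕ) : Set ℝ :=
  if τ = 0 then {0} else {x | ∃ p ∈ Lambda τ, x = p.1 ∨ x = p.2}

/-- The truncated lacunary set `lac_τ^n`: endpoints of intervals in `Λ_τ` of length `≥ n`. -/
def lacT (τ : ℕ) (n : ℝ) : Set ℝ :=
  if τ = 0 then {0} else {x | ∃ p ∈ Lambda τ, n ≤ p.2 - p.1 ∧ (x = p.1 ∨ x = p.2)}

/-- The least significant digit of the non-adjacent form of `z`. -/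
def nafDigit (z : ℤ) : ℤ := if z % 2 = 0 then 0 else if z % 4 = 1 then 1 else -1

/-- The integer whose non-adjacent form is that of `z` with the last digit removed. -/
def nafTail (z : ℤ) : ℤ := (z - nafDigit z) / 2

/-- The positions below `N` of the nonzero digits of the non-adjacent form of `z`. -/
def nafSupport (N : ℕ) (z : ℤ) : Finset ℕ :=
  (Finset.range N).filter fun j => nafTail^[j] z % 2 ≠ 0

/-- The number of nonzero digits below position `N` in the non-adjacent form of `z`. -/
def nafWeight (N : ℕ) (z : ℤ) : ℕ :=
  ∑ j ∈ Finset.range N, if nafTail^[j] z % 2 = 0 then 0 else 1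

lemma two_mul_nafTail_add (z : ℤ) : 2 * nafTail z + nafDigit z = z := by
  unfold nafTail nafDigit; split_ifs <;> omega

lemma nafTail_zero : nafTail 0 = 0 := by simp [nafTail, nafDigit]

lemma card_nafSupport (N : ℕ) (z : ℤ) : (nafSupport N z).card = nafWeight N z := by
  rw [nafSupport, Finset.card_filter, nafWeight]
  exact Finset.sum_congr rfl fun j _ => by split_ifs <;> simp_all

lemma nafWeight_succ (N : ℕ) (z : ℤ) :
    nafWeight (N + 1) z = nafWeight N (nafTail z) + if z % 2 = 0 then 0 else 1 := by
  rw [nafWeight, Finset.sum_range_succ']; rfl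

lemma nafWeight_zero_right (N : ℕ) : nafWeight N 0 = 0 := by
  induction N with
  | zero => simp [nafWeight]
  | succ N ih => simp [nafWeight_succ, nafTail_zero, ih]

lemma nafWeight_add_pow_le (N : ℕ) : ∀ (z s : ℤ) (_ : s = 1 ∨ s = -1),
    (∀ n : ℕ, nafWeight N (z + s * 2 ^ n) ≤ nafWeight N z + 1) ∧
      (z % 2 ≠ 0 → nafWeight N (z + s) ≤ nafWeight N z) := by
  induction N with
  | zero => intro z s _; simp [nafWeight]
  | succ N ih =>
    intro z s hs
    have odd_case : z % 2 ≠ 0 → nafWeight (N + 1) (z + s) ≤ nafWeight (N + 1) z := by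
      intro hz
      have h0 := (ih (nafTail z) s hs).1 0
      rw [nafWeight_succ, nafWeight_succ]
      have : nafTail (z + s) = nafTail z ∨ nafTail (z + s) = nafTail z + s * 2 ^ 0 := by
        unfold nafTail nafDigit
        rcases hs with rfl | rfl <;> split_ifs <;> omega
      have h2 : (z + s) % 2 = 0 := by omega
      rcases this with h | h <;> rw [h] <;> simp only [h2, hz, if_true, if_false] <;> omega
    refine ⟨?_, odd_case⟩
    intro n
    by_cases hz : z % 2 = 0
    · rcases n with _ | n
      · have h2 : (z + s * 2 ^ 0) % 2 ≠ 0 := by omega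
        rw [nafWeight_succ, nafWeight_succ]
        simp only [h2, hz, if_true, if_false]
        have hh := (ih (nafTail z) s hs).2
        have : nafTail (z + s * 2 ^ 0) = nafTail z ∨
            (nafTail z % 2 ≠ 0 ∧ nafTail (z + s * 2 ^ 0) = nafTail z + s) := by
          unfold nafTail nafDigit
          rcases hs with rfl | rfl <;> split_ifs <;> omega
        rcases this with h | ⟨h, h'⟩
        · rw [h]
        · rw [h']; have := hh h; omega
      · have h2 : (z + s * 2 ^ (n + 1)) % 2 = 0 := by
          rw [pow_succ, ← mul_assoc]; omega
        have h3 : nafTail (z + s * 2 ^ (n + 1)) = nafTail z + s * 2 ^ n := by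
          unfold nafTail nafDigit
          simp only [h2, hz, if_true]
          rw [pow_succ, ← mul_assoc]; omega
        rw [nafWeight_succ, nafWeight_succ, h3]
        have := (ih (nafTail z) s hs).1 n
        simp only [h2, hz, if_true]; omega
    · rcases n with _ | _ | n
      · have := odd_case hz
        simp only [pow_zero, mul_one]; omega
      · have h2 : (z + s * 2 ^ 1) % 2 ≠ 0 := by omega
        rw [nafWeight_succ, nafWeight_succ]
        have h1 := (ih (nafTail z) s hs).1 1
        have : nafTail (z + s * 2 ^ 1) = nafTail z ∨
            nafTail (z + s * 2 ^ 1) = nafTail z + s * 2 ^ 1 := by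
          unfold nafTail nafDigit
          rcases hs with rfl | rfl <;> split_ifs <;> omega
        simp only [zero_add, h2, hz, if_false]
        rcases this with h | h <;> rw [h] <;> omega
      · have e : s * 2 ^ (n + 1 + 1) = 4 * (s * 2 ^ n) := by ring
        have e' : s * 2 ^ (n + 1) = 2 * (s * 2 ^ n) := by ring
        have h2 : (z + s * 2 ^ (n + 1 + 1)) % 2 ≠ 0 := by rw [e]; omega
        have h3 : nafTail (z + s * 2 ^ (n + 1 + 1)) = nafTail z + s * 2 ^ (n + 1) := by
          rw [e, e']; unfold nafTail nafDigit
          split_ifs <;> omega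
        rw [nafWeight_succ, nafWeight_succ, h3]
        have := (ih (nafTail z) s hs).1 (n + 1)
        simp only [h2, hz, if_false]; omega

lemma iterate_nafTail_eq_zero (N : ℕ) : ∀ z : ℤ, z.natAbs ≤ N → nafTail^[N] z = 0 := by
  induction N with
  | zero => intro z hz; simpa using hz
  | succ N ih =>
    intro z hz
    rw [Function.iterate_succ_apply]
    apply ih
    unfold nafTail nafDigit
    split_ifs <;> omega

/-- Integers with the same non-adjacent form coincide. -/
lemma eq_of_nafDigit_eq (N : ℕ) : ∀ z z' : ℤ, nafTail^[N] z = 0 → nafTail^[N] z' = 0 →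
    (∀ j < N, nafDigit (nafTail^[j] z) = nafDigit (nafTail^[j] z')) → z = z' := by
  induction N with
  | zero => intro z z' h h' _; simp_all
  | succ N ih =>
    intro z z' h h' hd
    have h1 : nafTail z = nafTail z' := ih _ _ h h' fun j hj => hd (j + 1) (by omega)
    have h2 := hd 0 (by omega)
    simp only [Function.iterate_zero, id] at h2
    rw [← two_mul_nafTail_add z, ← two_mul_nafTail_add z', h1, h2]

lemma card_filter_nafSupport_le (N : ℕ) (F : Finset ℤ) (hF : ∀ z ∈ F, nafTail^[N] z = 0)
    (S : Finset ℕ) : (F.filter fun z => nafSupport N z = S).card ≤ 2 ^ S.card := by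
  rw [← Finset.card_powerset]
  refine Finset.card_le_card_of_injOn
    (fun z => S.filter fun j => nafTail^[j] z % 4 = 1) ?_ ?_
  · intro z _; exact Finset.mem_powerset.2 (Finset.filter_subset _ _)
  · intro z hz z' hz' h
    simp only [Finset.coe_filter, Set.mem_ofPred_eq] at hz hz'
    refine eq_of_nafDigit_eq N z z' (hF z hz.1) (hF z' hz'.1) fun j hj => ?_
    have h1 := Finset.ext_iff.1 hz.2 j
    have h2 := Finset.ext_iff.1 hz'.2 j
    have h3 := Finset.ext_iff.1 h j
    simp only [nafSupport, Finset.mem_filter, Finset.mem_range, hj, true_and] at h1 h2 h3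
    unfold nafDigit
    by_cases hS : j ∈ S <;> simp only [hS, iff_true, iff_false, true_and] at h1 h2 h3 <;>
      split_ifs <;> first | rfl | omega

lemma choose_two_mul_le (q k : ℕ) : (2 * q).choose (2 * k) ≤ q.choose k * (2 * q) ^ k := by
  induction k with
  | zero => simp
  | succ k ih =>
    rcases Nat.lt_or_ge k q with hk | hk
    · have h1 := Nat.choose_succ_right_eq (2 * q) (2 * k)
      have h2 := Nat.choose_succ_right_eq (2 * q) (2 * k + 1)
      have h3 := Nat.choose_succ_right_eq q k
      obtain ⟨d, rfl⟩ := Nat.exists_eq_add_of_lt hk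
      have e1 : 2 * (k + d + 1) - 2 * k = 2 * d + 2 := by omega
      have e2 : 2 * (k + d + 1) - (2 * k + 1) = 2 * d + 1 := by omega
      have e3 : k + d + 1 - k = d + 1 := by omega
      rw [e1] at h1; rw [e2] at h2; rw [e3] at h3
      rw [show 2 * (k + 1) = 2 * k + 1 + 1 by ring]
      set Q := 2 * (k + d + 1) with hQ
      have key : Q.choose (2 * k + 1 + 1) * ((2 * k + 1 + 1) * (2 * k + 1)) ≤
          ((k + d + 1).choose (k + 1) * Q ^ (k + 1)) * ((2 * k + 1 + 1) * (2 * k + 1)) := by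
        calc Q.choose (2 * k + 1 + 1) * ((2 * k + 1 + 1) * (2 * k + 1))
            = Q.choose (2 * k) * ((2 * d + 2) * (2 * d + 1)) := by
              rw [← mul_assoc, h2]
              calc _ = Q.choose (2 * k + 1) * (2 * k + 1) * (2 * d + 1) := by ring
                _ = _ := by rw [h1]; ring
          _ ≤ ((k + d + 1).choose k * Q ^ k) * ((2 * d + 2) * Q) := by
              gcongr; omega
          _ = (k + d + 1).choose k * (d + 1) * (2 * Q ^ (k + 1)) := by ring
          _ = (k + d + 1).choose (k + 1) * Q ^ (k + 1) * (2 * k + 1 + 1) := by rw [← h3]; ring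
          _ ≤ _ := by
              rw [← mul_assoc]
              exact Nat.le_mul_of_pos_right _ (by omega)
      exact Nat.le_of_mul_le_mul_right key (by positivity)
    · have : (2 * q).choose (2 * (k + 1)) = 0 := Nat.choose_eq_zero_of_lt (by omega)
      rw [this]; exact Nat.zero_le _

lemma sum_range_two_mul_succ {M : Type*} [AddCommMonoid M] (F : ℕ → M) (q : ℕ) :
    ∑ m ∈ Finset.range (2 * q + 1), F m =
      ∑ k ∈ Finset.range (q + 1), F (2 * k) + ∑ k ∈ Finset.range q, F (2 * k + 1) := by
  induction q with
  | zero => simp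
  | succ q ih =>
    rw [show 2 * (q + 1) + 1 = 2 * q + 1 + 1 + 1 by ring, Finset.sum_range_succ,
      Finset.sum_range_succ, ih, Finset.sum_range_succ (fun k => F (2 * k)) (q + 1),
      Finset.sum_range_succ (fun k => F (2 * k + 1)) q, show 2 * q + 1 + 1 = 2 * (q + 1) by ring]
    abel

/-- The two-point hypercontractive inequality for even exponents. -/
lemma two_point_inequality (q : ℕ) (g h : ℝ) :
    (g + h) ^ (2 * q) + (g - h) ^ (2 * q) ≤ 2 * (g ^ 2 + 2 * q * h ^ 2) ^ q := by
  rw [sub_eq_add_neg, add_comm g h, add_comm g (-h), add_comm (g ^ 2), add_pow h, add_pow (-h),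
    add_pow (2 * (q : ℝ) * h ^ 2),
    ← Finset.sum_add_distrib, sum_range_two_mul_succ, Finset.mul_sum]
  have hodd : ∑ k ∈ Finset.range q, (h ^ (2 * k + 1) * g ^ (2 * q - (2 * k + 1)) *
      ((2 * q).choose (2 * k + 1) : ℝ) + (-h) ^ (2 * k + 1) * g ^ (2 * q - (2 * k + 1)) *
      ((2 * q).choose (2 * k + 1) : ℝ)) = 0 := by
    refine Finset.sum_eq_zero fun k _ => ?_
    rw [Odd.neg_pow (by simp : Odd (2 * k + 1))]; ring
  rw [hodd, add_zero]
  refine Finset.sum_le_sum fun k hk => ?_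
  rw [Even.neg_pow (by simp : Even (2 * k)), show 2 * q - 2 * k = 2 * (q - k) by omega,
    pow_mul, pow_mul, mul_pow]
  have hc : ((2 * q).choose (2 * k) : ℝ) ≤ q.choose k * (2 * q) ^ k := by
    exact_mod_cast choose_two_mul_le q k
  have : 0 ≤ (h ^ 2) ^ k * (g ^ 2) ^ (q - k) := by positivity
  nlinarith [mul_le_mul_of_nonneg_left hc this]

/-- Minkowski's inequality for sums of `q`-th powers, with a normalizing constant. -/
lemma sum_add_pow_le {ι : Type*} (s : Finset ι) (u v : ι → ℝ) (q : ℕ) (hq : 1 ≤ q)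
    (K U V : ℝ) (hu : ∀ i, 0 ≤ u i) (hv : ∀ i, 0 ≤ v i) (hU : 0 ≤ U) (hV : 0 ≤ V)
    (hK : 0 ≤ K) (h1 : ∑ i ∈ s, u i ^ q ≤ K * U ^ q) (h2 : ∑ i ∈ s, v i ^ q ≤ K * V ^ q) :
    ∑ i ∈ s, (u i + v i) ^ q ≤ K * (U + V) ^ q := by
  have hq' : (1 : ℝ) ≤ q := by exact_mod_cast hq
  have hq0 : (q : ℝ) ≠ 0 := by positivity
  have key := Real.Lp_add_le_of_nonneg s hq' (fun i _ => hu i) (fun i _ => hv i)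
  simp only [Real.rpow_natCast] at key
  have root : ∀ W : ℝ, 0 ≤ W → (K * W ^ q) ^ (1 / (q : ℝ)) = K ^ (1 / (q : ℝ)) * W := by
    intro W hW
    rw [Real.mul_rpow hK (by positivity), one_div, Real.pow_rpow_inv_natCast hW (by omega)]
  have b1 := Real.rpow_le_rpow (Finset.sum_nonneg fun i _ => pow_nonneg (hu i) q) h1
    (by positivity : 0 ≤ 1 / (q : ℝ))
  have b2 := Real.rpow_le_rpow (Finset.sum_nonneg fun i _ => pow_nonneg (hv i) q) h2
    (by positivity : 0 ≤ 1 / (q : ℝ))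
  rw [root _ hU] at b1
  rw [root _ hV] at b2
  have hs : 0 ≤ ∑ i ∈ s, (u i + v i) ^ q :=
    Finset.sum_nonneg fun i _ => pow_nonneg (add_nonneg (hu i) (hv i)) q
  have b3 : (∑ i ∈ s, (u i + v i) ^ q) ^ (1 / (q : ℝ)) ≤ K ^ (1 / (q : ℝ)) * (U + V) := by
    rw [mul_add]; linarith
  have b4 := pow_le_pow_left₀ (by positivity) b3 q
  rwa [one_div, Real.rpow_inv_natCast_pow hs (by omega), mul_pow,
    Real.rpow_inv_natCast_pow hK (by omega)] at b4

/-- The Walsh character indexed by `S`, evaluated at the point of the cube which is `-1` exactly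
on `A`. -/
def walsh (A S : Finset ℕ) : ℝ := ∏ j ∈ S, if j ∈ A then -1 else 1

lemma walsh_mul_self (A S : Finset ℕ) : walsh A S * walsh A S = 1 := by
  unfold walsh
  rw [← Finset.prod_mul_distrib]
  refine Finset.prod_eq_one fun j _ => ?_
  split_ifs <;> norm_num

lemma abs_walsh (A S : Finset ℕ) : |walsh A S| = 1 := by
  have := walsh_mul_self A S
  rw [← abs_mul_abs_self] at this
  nlinarith [abs_nonneg (walsh A S)]

lemma walsh_insert_left {n : ℕ} {A S : Finset ℕ} (hS : n ∉ S) :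
    walsh (insert n A) S = walsh A S := by
  refine Finset.prod_congr rfl fun j hj => ?_
  have : j ≠ n := fun h => hS (h ▸ hj)
  simp [this]

lemma walsh_insert_right {n : ℕ} {A S : Finset ℕ} (hA : n ∉ A) (hS : n ∉ S) :
    walsh A (insert n S) = walsh A S := by
  simp [walsh, Finset.prod_insert hS, hA]

lemma walsh_insert_insert {n : ℕ} {A S : Finset ℕ} (hS : n ∉ S) :
    walsh (insert n A) (insert n S) = -walsh A S := by
  rw [← walsh_insert_left (A := A) hS]
  simp [walsh, Finset.prod_insert hS]

/-- Bonami's hypercontractive inequality on the discrete cube, for even exponents. -/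
lemma bonami_real (q : ℕ) (hq : 1 ≤ q) (s : Finset ℕ) : ∀ a : Finset ℕ → ℝ,
    ∑ A ∈ s.powerset, (∑ S ∈ s.powerset, a S * walsh A S) ^ (2 * q) ≤
      2 ^ s.card * (∑ S ∈ s.powerset, (2 * q : ℝ) ^ S.card * a S ^ 2) ^ q := by
  induction s using Finset.induction_on with
  | empty => intro a; simp [walsh, pow_mul]
  | insert n s hn ih =>
    intro a
    have hmem : ∀ A ∈ s.powerset, n ∉ A := fun A hA h => hn (Finset.mem_powerset.1 hA h)
    set g : Finset ℕ → ℝ := fun A => ∑ S ∈ s.powerset, a S * walsh A S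
    set h : Finset ℕ → ℝ := fun A => ∑ S ∈ s.powerset, a (insert n S) * walsh A S
    have e1 : ∀ A ∈ s.powerset,
        ∑ S ∈ (insert n s).powerset, a S * walsh A S = g A + h A := by
      intro A hA
      rw [Finset.sum_powerset_insert hn]
      congr 1
      exact Finset.sum_congr rfl fun S hS => by
        rw [walsh_insert_right (hmem A hA) (hmem S hS)]
    have e2 : ∀ A ∈ s.powerset,
        ∑ S ∈ (insert n s).powerset, a S * walsh (insert n A) S = g A - h A := by
      intro A hA
      rw [Finset.sum_powerset_insert hn, sub_eq_add_neg, ← Finset.sum_neg_distrib]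
      congr 1
      · exact Finset.sum_congr rfl fun S hS => by rw [walsh_insert_left (hmem S hS)]
      · exact Finset.sum_congr rfl fun S hS => by
          rw [walsh_insert_insert (hmem S hS), mul_neg]
    rw [Finset.sum_powerset_insert hn, Finset.sum_powerset_insert hn, ← Finset.sum_add_distrib,
      Finset.card_insert_of_notMem hn]
    have e3 : ∑ S ∈ s.powerset, (2 * q : ℝ) ^ (insert n S).card * a (insert n S) ^ 2 =
        2 * q * ∑ S ∈ s.powerset, (2 * q : ℝ) ^ S.card * a (insert n S) ^ 2 := by
      rw [Finset.mul_sum]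
      exact Finset.sum_congr rfl fun S hS => by
        rw [Finset.card_insert_of_notMem (hmem S hS)]; ring
    rw [e3]
    have hg := ih a
    have hh := ih fun S => a (insert n S)
    set G := ∑ S ∈ s.powerset, (2 * q : ℝ) ^ S.card * a S ^ 2
    set H := ∑ S ∈ s.powerset, (2 * q : ℝ) ^ S.card * a (insert n S) ^ 2
    have hG : 0 ≤ G := Finset.sum_nonneg fun _ _ => by positivity
    have hH : 0 ≤ H := Finset.sum_nonneg fun _ _ => by positivity
    calc _ ≤ ∑ A ∈ s.powerset, 2 * (g A ^ 2 + 2 * q * h A ^ 2) ^ q := by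
          refine Finset.sum_le_sum fun A hA => ?_
          rw [e1 A hA, e2 A hA]
          exact two_point_inequality q _ _
      _ ≤ 2 * (2 ^ s.card * (G + 2 * q * H) ^ q) := by
          rw [← Finset.mul_sum]
          refine mul_le_mul_of_nonneg_left ?_ zero_le_two
          refine sum_add_pow_le _ _ _ q hq _ _ _ (fun _ => by positivity)
            (fun _ => by positivity) hG (by positivity) (by positivity) ?_ ?_
          · simpa only [← pow_mul] using hg
          · simp only [mul_pow _ _ q, ← Finset.mul_sum, ← pow_mul _ 2 q]
            rw [mul_left_comm]
            exact mul_le_mul_of_nonneg_left hh (by positivity)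
      _ = _ := by ring

lemma bonami_complex (q : ℕ) (hq : 1 ≤ q) (s : Finset ℕ) (a : Finset ℕ → ℂ) :
    ∑ A ∈ s.powerset, ‖∑ S ∈ s.powerset, a S * (walsh A S : ℂ)‖ ^ (2 * q) ≤
      2 ^ s.card * (∑ S ∈ s.powerset, (2 * q : ℝ) ^ S.card * ‖a S‖ ^ 2) ^ q := by
  have e : ∀ S, (2 * q : ℝ) ^ S.card * ‖a S‖ ^ 2 = (2 * q : ℝ) ^ S.card * (a S).re ^ 2 +
      (2 * q : ℝ) ^ S.card * (a S).im ^ 2 := by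
    intro (S : Finset ℕ)
    rw [Complex.sq_norm, Complex.normSq_apply]; ring
  simp only [e, Finset.sum_add_distrib]
  have e2 : ∀ A, ‖∑ S ∈ s.powerset, a S * (walsh A S : ℂ)‖ ^ (2 * q) =
      ((∑ S ∈ s.powerset, (a S).re * walsh A S) ^ 2 +
        (∑ S ∈ s.powerset, (a S).im * walsh A S) ^ 2) ^ q := by
    intro A
    rw [pow_mul, Complex.sq_norm, Complex.normSq_apply, Complex.re_sum, Complex.im_sum]
    simp [sq]
  simp only [e2]
  refine sum_add_pow_le _ _ _ q hq _ _ _ (fun _ => by positivity) (fun _ => by positivity)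
    (Finset.sum_nonneg fun _ _ => by positivity) (Finset.sum_nonneg fun _ _ => by positivity)
    (by positivity) ?_ ?_
  · simpa only [← pow_mul] using bonami_real q hq s fun S => (a S).re
  · simpa only [← pow_mul] using bonami_real q hq s fun S => (a S).im

/-- The unimodular exponential `e(t) = exp(2πit)`. -/
def expi (t : ℝ) : ℂ := Complex.exp (((2 * π * t : ℝ) : ℂ) * Complex.I)

lemma expi_add (s t : ℝ) : expi (s + t) = expi s * expi t := by
  unfold expi; rw [← Complex.exp_add]; congr 1; push_cast; ring

lemma norm_expi (t : ℝ) : ‖expi t‖ = 1 := by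
  unfold expi; exact Complex.norm_exp_ofReal_mul_I _

lemma expi_intCast (n : ℤ) : expi n = 1 := by
  unfold expi
  rw [Complex.exp_eq_one_iff]
  exact ⟨n, by push_cast; ring⟩

lemma expi_half : expi (1 / 2) = -1 := by
  unfold expi
  rw [← Complex.exp_pi_mul_I]; congr 1; push_cast; ring

lemma continuous_expi : Continuous expi := by
  unfold expi; fun_prop

lemma ofReal_cos_pi_mul (t : ℝ) :
    ((Real.cos (π * t) : ℝ) : ℂ) = (expi (t / 2) + expi (-(t / 2))) / 2 := by
  unfold expi
  rw [Complex.ofReal_cos, Complex.cos]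
  congr 3 <;> congr 1 <;> push_cast <;> ring

/-- The function `φ` is the Fourier transform of a finitely supported probability measure on
the circle. -/
def IsFinTransform (φ : ℤ → ℂ) : Prop :=
  ∃ (ι : Type) (_ : Fintype ι) (p y : ι → ℝ), (∀ i, 0 ≤ p i) ∧ ∑ i, p i = 1 ∧
    ∀ z : ℤ, φ z = ∑ i, (p i : ℂ) * expi (z * y i)

lemma IsFinTransform.half_add {φ ψ : ℤ → ℂ} (hφ : IsFinTransform φ) (hψ : IsFinTransform ψ) :
    IsFinTransform fun z => (φ z + ψ z) / 2 := by
  obtain ⟨ι, _, p, y, hp, hs, h⟩ := hφ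
  obtain ⟨κ, _, p', y', hp', hs', h'⟩ := hψ
  refine ⟨ι ⊕ κ, inferInstance, Sum.elim (fun i => p i / 2) (fun i => p' i / 2), Sum.elim y y',
    ?_, ?_, ?_⟩
  · rintro (i | i)
    · exact div_nonneg (hp i) zero_le_two
    · exact div_nonneg (hp' i) zero_le_two
  · simp [← Finset.sum_div, hs, hs']; norm_num
  · intro z
    simp only [h, h', Fintype.sum_sum_type, Sum.elim_inl, Sum.elim_inr, add_div, Finset.sum_div]
    push_cast
    congr 1 <;> exact Finset.sum_congr rfl fun i _ => by ring

/-- Pulling back a measure under `x ↦ 2x` and multiplying it by `1 + r cos(2πx)`. -/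
lemma IsFinTransform.riesz {φ : ℤ → ℂ} (hφ : IsFinTransform φ) (r : ℝ) (hr : |r| ≤ 1) :
    ∃ ψ, IsFinTransform ψ ∧ (∀ m, ψ (2 * m) = φ m) ∧
      ∀ m, ψ (2 * m + 1) = r / 2 * (φ m + φ (m + 1)) := by
  obtain ⟨ι, _, p, y, hp, hs, h⟩ := hφ
  have hc : ∀ t, |r * Real.cos t| ≤ 1 := fun t => by
    rw [abs_mul]; exact mul_le_one₀ hr (abs_nonneg _) (Real.abs_cos_le_one t)
  let p' : ι ⊕ ι → ℝ := Sum.elim (fun i => p i / 2 * (1 + r * Real.cos (π * y i)))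
    (fun i => p i / 2 * (1 - r * Real.cos (π * y i)))
  let y' : ι ⊕ ι → ℝ := Sum.elim (fun i => y i / 2) (fun i => y i / 2 + 1 / 2)
  refine ⟨fun z => ∑ i, (p' i : ℂ) * expi (z * y' i), ⟨ι ⊕ ι, inferInstance, p', y', ?_, ?_,
    fun _ => rfl⟩, ?_, ?_⟩
  · rintro (i | i)
    · exact mul_nonneg (div_nonneg (hp i) zero_le_two)
        (by linarith [(abs_le.1 (hc (π * y i))).1])
    · exact mul_nonneg (div_nonneg (hp i) zero_le_two)
        (by linarith [(abs_le.1 (hc (π * y i))).2])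
  · simp only [p', Fintype.sum_sum_type, Sum.elim_inl, Sum.elim_inr, ← Finset.sum_add_distrib]
    exact (Finset.sum_congr rfl fun i _ => by ring).trans hs
  · intro m
    simp only [p', y', Fintype.sum_sum_type, Sum.elim_inl, Sum.elim_inr,
      ← Finset.sum_add_distrib, h]
    refine Finset.sum_congr rfl fun i _ => ?_
    have e1 : ((2 * m : ℤ) : ℝ) * (y i / 2) = m * y i := by push_cast; ring
    have e2 : ((2 * m : ℤ) : ℝ) * (y i / 2 + 1 / 2) = m * y i + m := by push_cast; ring
    rw [e1, e2, expi_add, expi_intCast]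
    push_cast; ring
  · intro m
    simp only [p', y', Fintype.sum_sum_type, Sum.elim_inl, Sum.elim_inr,
      ← Finset.sum_add_distrib, h, Finset.mul_sum]
    refine Finset.sum_congr rfl fun i _ => ?_
    have e1 : ((2 * m + 1 : ℤ) : ℝ) * (y i / 2) = m * y i + y i / 2 := by push_cast; ring
    have e2 : ((2 * m + 1 : ℤ) : ℝ) * (y i / 2 + 1 / 2) = (m * y i + y i / 2) + (m + 1 / 2) := by
      push_cast; ring
    have e3 : ((m + 1 : ℤ) : ℝ) * y i = m * y i + (y i / 2 + y i / 2) := by push_cast; ring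
    have e4 : expi (y i / 2) * expi (-(y i / 2)) = 1 := by
      rw [← expi_add, add_neg_cancel]; simpa using expi_intCast 0
    rw [e1, e2, e3, expi_add _ ((m : ℝ) + 1 / 2), expi_add (m : ℝ), expi_intCast, expi_half,
      expi_add, expi_add _ (y i / 2 + y i / 2), expi_add (y i / 2)]
    push_cast
    have e5 := ofReal_cos_pi_mul (y i)
    push_cast at e5
    rw [e5]
    linear_combination (p i : ℂ) * r / 2 * expi (m * y i) * e4

lemma isFinTransform_even : ∃ φ, IsFinTransform φ ∧ φ 0 = 1 ∧ ∀ z : ℤ, z % 2 ≠ 0 → φ z = 0 := by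
  have h : IsFinTransform fun _ => 1 :=
    ⟨Unit, inferInstance, fun _ => 1, fun _ => 0, fun _ => zero_le_one, by simp, fun z => by
      simpa using (expi_intCast 0).symm⟩
  obtain ⟨ψ, hψ, h0, h1⟩ := h.riesz 0 (by simp)
  refine ⟨ψ, hψ, by simpa using h0 0, fun z hz => ?_⟩
  have := h1 (z / 2)
  rw [show 2 * (z / 2) + 1 = z by omega] at this
  simpa using this

/-- Randomized Riesz products: both conditional averages of the product in the lowest position.
Their mean has the Fourier coefficient `∏ r_j / 8` over the support of the non-adjacent form. -/
lemma exists_riesz_pair (N : ℕ) : ∀ r : ℕ → ℝ, (∀ j, |r j| ≤ 1) →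
    ∃ φ ψ, IsFinTransform φ ∧ IsFinTransform ψ ∧ (∀ z : ℤ, z % 2 ≠ 0 → φ z = 0) ∧
      (∀ z : ℤ, z % 2 = 0 → φ z = ψ z) ∧
      ∀ z : ℤ, nafTail^[N] z = 0 →
        (φ z + ψ z) / 2 = ∏ j ∈ Finset.range N,
          if nafTail^[j] z % 2 = 0 then (1 : ℂ) else (r j : ℂ) / 8 := by
  induction N with
  | zero =>
    intro r _
    obtain ⟨φ, hφ, h0, h1⟩ := isFinTransform_even
    refine ⟨φ, φ, hφ, hφ, h1, fun _ _ => rfl, fun z hz => ?_⟩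
    simp only [Function.iterate_zero, id] at hz
    subst hz; simp [h0]
  | succ N ih =>
    intro r hr
    obtain ⟨φ, ψ, hφ, hψ, hodd, heven, hN⟩ := ih (fun j => r (j + 1)) fun j => hr (j + 1)
    obtain ⟨φ', hφ', h0, h1⟩ := (hφ.half_add hψ).riesz 0 (by simp)
    obtain ⟨α, hα, hα0, hα1⟩ := hφ.riesz (r 0) (hr 0)
    obtain ⟨β, hβ, hβ0, hβ1⟩ := hψ.riesz 0 (by simp)
    have hodd' : ∀ z : ℤ, z % 2 ≠ 0 → φ' z = 0 := fun z hz => by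
      have := h1 (z / 2)
      rw [show 2 * (z / 2) + 1 = z by omega] at this
      simpa using this
    have heven' : ∀ z : ℤ, z % 2 = 0 → φ' z = (α z + β z) / 2 := fun z hz => by
      have e : z = 2 * (z / 2) := by omega
      rw [e, h0, hα0, hβ0]
    refine ⟨φ', fun z => (α z + β z) / 2, hφ', hα.half_add hβ, hodd', heven', fun z hz => ?_⟩
    have hprod : (∏ j ∈ Finset.range (N + 1),
        if nafTail^[j] z % 2 = 0 then (1 : ℂ) else (r j : ℂ) / 8) =
        (∏ j ∈ Finset.range N, if nafTail^[j] (nafTail z) % 2 = 0 then (1 : ℂ) else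
          (r (j + 1) : ℂ) / 8) * if z % 2 = 0 then (1 : ℂ) else (r 0 : ℂ) / 8 :=
      Finset.prod_range_succ' _ _
    rw [Function.iterate_succ_apply] at hz
    rw [hprod, ← hN _ hz]
    change (φ' z + (α z + β z) / 2) / 2 = _
    by_cases hz2 : z % 2 = 0
    · rw [← heven' z hz2, if_pos hz2, mul_one, add_self_div_two]
      have e : nafTail z = z / 2 := by simp [nafTail, nafDigit, hz2]
      conv_lhs => rw [show z = 2 * (z / 2) by omega, h0]
      rw [e]
    · rw [if_neg hz2, hodd' z hz2]
      have e1 := hα1 (z / 2)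
      have e2 := hβ1 (z / 2)
      rw [show 2 * (z / 2) + 1 = z by omega] at e1 e2
      have hT : nafTail z % 2 = 0 := by
        unfold nafTail nafDigit; split_ifs <;> omega
      have hφψ := heven _ hT
      have e3 : φ (z / 2) + φ (z / 2 + 1) = φ (nafTail z) := by
        have : (nafTail z = z / 2 ∧ (z / 2 + 1) % 2 ≠ 0) ∨
            (nafTail z = z / 2 + 1 ∧ (z / 2) % 2 ≠ 0) := by
          unfold nafTail nafDigit; split_ifs <;> omega
        rcases this with ⟨h, h'⟩ | ⟨h, h'⟩
        · rw [hodd _ h', add_zero, h]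
        · rw [hodd _ h', zero_add, h]
      rw [e1, e2, e3, ← hφψ]
      push_cast; ring

lemma exists_riesz_measure (N : ℕ) (A : Finset ℕ) : ∃ φ, IsFinTransform φ ∧
    ∀ z : ℤ, nafTail^[N] z = 0 →
      φ z * 8 ^ nafWeight N z * (walsh A (nafSupport N z) : ℂ) = 1 := by
  obtain ⟨φ, ψ, hφ, hψ, -, -, h⟩ := exists_riesz_pair N (fun j => if j ∈ A then -1 else 1)
    (fun j => by split_ifs <;> simp)
  refine ⟨_, hφ.half_add hψ, fun z hz => ?_⟩
  rw [h z hz, ← card_nafSupport, walsh, nafSupport, Complex.ofReal_prod, ← Finset.prod_const,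
    Finset.prod_filter, Finset.prod_filter, ← Finset.prod_mul_distrib, ← Finset.prod_mul_distrib]
  refine Finset.prod_eq_one fun j _ => ?_
  split_ifs <;> simp_all

lemma exists_int_of_mem_lambda (τ : ℕ) (hτ : 1 ≤ τ) : ∀ p ∈ Lambda τ, 1 ≤ p.2 - p.1 →
    (∃ z : ℤ, p.1 = z ∧ ∀ N, nafWeight N z ≤ τ) ∧ ∃ z : ℤ, p.2 = z ∧ ∀ N, nafWeight N z ≤ τ := by
  have pow_nat : ∀ k : ℤ, 1 ≤ (2 : ℝ) ^ k → ∃ n : ℕ, (2 : ℝ) ^ k = ((2 ^ n : ℤ) : ℝ) ∧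
      (2 : ℝ) ^ (k + 1) = ((2 ^ (n + 1) : ℤ) : ℝ) := by
    intro k hk
    have hk0 : 0 ≤ k := by
      by_contra h
      exact absurd hk (not_le.2 (zpow_lt_one_of_neg₀ one_lt_two (not_le.1 h)))
    lift k to ℕ using hk0
    exact ⟨k, by push_cast; exact zpow_natCast _ _, by push_cast; exact_mod_cast zpow_natCast (2 : ℝ) (k + 1)⟩
  have single : ∀ (s : ℤ) (_ : s = 1 ∨ s = -1) (n N : ℕ), nafWeight N (s * 2 ^ n) ≤ 1 := by
    intro s hs n N
    simpa [nafWeight_zero_right] using (nafWeight_add_pow_le N 0 s hs).1 n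
  induction τ, hτ using Nat.le_induction with
  | base =>
    rintro p ⟨k, rfl | rfl⟩ hp
    · have e : (2 : ℝ) ^ (k + 1) = 2 ^ k * 2 := zpow_add_one₀ two_ne_zero k
      obtain ⟨n, h1, h2⟩ := pow_nat k (by simp only [e] at hp; linarith)
      exact ⟨⟨2 ^ n, h1, by simpa using single 1 (.inl rfl) n⟩,
        ⟨2 ^ (n + 1), h2, by simpa using single 1 (.inl rfl) (n + 1)⟩⟩
    · have e : (2 : ℝ) ^ (k + 1) = 2 ^ k * 2 := zpow_add_one₀ two_ne_zero k
      obtain ⟨n, h1, h2⟩ := pow_nat k (by simp only [e] at hp; linarith)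
      exact ⟨⟨-2 ^ (n + 1), by simp only [h2]; push_cast; rfl,
          by simpa using single (-1) (.inr rfl) (n + 1)⟩,
        ⟨-2 ^ n, by simp only [h1]; push_cast; rfl, by simpa using single (-1) (.inr rfl) n⟩⟩
  | succ τ hτ ih =>
    intro p hp hlen
    obtain ⟨t, rfl⟩ : ∃ t, τ = t + 1 := ⟨τ - 1, by omega⟩
    simp only [Lambda, Set.mem_iUnion] at hp
    obtain ⟨I, hI, ⟨k, m, hk1, hk2⟩, h1, h2, hmin, -⟩ := hp
    obtain ⟨⟨a, ha, hwa⟩, ⟨b, hb, hwb⟩⟩ := ih I hI (by linarith)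
    have e : (2 : ℝ) ^ (k + 1) = 2 ^ k * 2 := zpow_add_one₀ two_ne_zero k
    have hlen' : p.2 - p.1 = 2 ^ k := by rw [hk1, hk2]; ring
    obtain ⟨n, hn1, hn2⟩ := pow_nat k (by linarith)
    have step : ∀ (s : ℤ) (_ : s = 1 ∨ s = -1) (c : ℤ), (∀ N, nafWeight N c ≤ t + 1) →
        ∀ n N, nafWeight N (c + s * 2 ^ n) ≤ t + 1 + 1 := by
      intro s hs c hc n N
      have := (nafWeight_add_pow_le N c s hs).1 n
      have := hc N
      omega
    rcases min_choice (p.1 - I.1) (I.2 - p.2) with h | h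
    · rw [h] at hmin
      exact ⟨⟨a + 1 * 2 ^ n, by push_cast at hn1 ⊢; linarith, step 1 (.inl rfl) a hwa n⟩,
        ⟨a + 1 * 2 ^ (n + 1), by push_cast at hn2 ⊢; linarith, step 1 (.inl rfl) a hwa _⟩⟩
    · rw [h] at hmin
      exact ⟨⟨b + -1 * 2 ^ (n + 1), by push_cast at hn2 ⊢; linarith,
          step (-1) (.inr rfl) b hwb _⟩,
        ⟨b + -1 * 2 ^ n, by push_cast at hn1 ⊢; linarith, step (-1) (.inr rfl) b hwb _⟩⟩

lemma exists_int_of_mem_lacT (τ : ℕ) (hτ : 1 ≤ τ) (x : ℝ) (hx : x ∈ lacT τ 1) :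
    ∃ z : ℤ, x = z ∧ ∀ N, nafWeight N z ≤ τ := by
  rw [lacT, if_neg (by omega)] at hx
  obtain ⟨p, hp, hlen, rfl | rfl⟩ := hx
  · exact (exists_int_of_mem_lambda τ hτ p hp hlen).1
  · exact (exists_int_of_mem_lambda τ hτ p hp hlen).2

/-- A Young-type inequality adapted to `L log^{τ/2} L`. -/
lemma mul_le_bfun_add_sum (τ : ℕ) (hτ : 1 ≤ τ) (R s t : ℝ) (hR : 1 ≤ R) (hs : 0 ≤ s)
    (ht : 0 ≤ t) (m : ℕ) (hm : t ^ 2 ≤ m) :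
    s * t ≤ R * Bfun ((τ : ℝ) / 2) s + ∑ n ∈ Finset.Icc 1 m,
      Real.exp (n + 1) * R * (n : ℝ) ^ τ / (R ^ 2 * (n : ℝ) ^ τ) ^ n * t ^ (2 * n) := by
  have hnn : ∀ n ∈ Finset.Icc 1 m, 0 ≤
      Real.exp (n + 1) * R * (n : ℝ) ^ τ / (R ^ 2 * (n : ℝ) ^ τ) ^ n * t ^ (2 * n) :=
    fun n _ => by positivity
  have hexp : 1 ≤ Real.log (Real.exp 1 + s) := by
    rw [Real.le_log_iff_exp_le (by positivity)]; linarith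
  have hpow : Real.log (Real.exp 1 + s) ^ ((τ : ℝ) / 2) =
      √(Real.log (Real.exp 1 + s)) ^ τ := by
    rw [Real.sqrt_eq_rpow, ← Real.rpow_natCast, ← Real.rpow_mul (by linarith)]
    congr 1; ring
  set L := Real.log (Real.exp 1 + s) with hL
  set n := ⌊L⌋₊ with hn
  have hn1 : 1 ≤ n := Nat.one_le_floor_iff _ |>.2 hexp
  have hn1' : (1 : ℝ) ≤ n := by exact_mod_cast hn1
  have hnL : (n : ℝ) ≤ L := Nat.floor_le (by linarith)
  have hLn : L < n + 1 := Nat.lt_floor_add_one L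
  have hv1 : (1 : ℝ) ≤ √n := Real.one_le_sqrt.2 hn1'
  set v : ℝ := R * √n ^ τ with hv
  have hv0 : 0 < v := by positivity
  rcases le_or_gt t v with h | h
  · have : s * t ≤ R * Bfun ((τ : ℝ) / 2) s := by
      unfold Bfun
      rw [← hL, hpow]
      calc s * t ≤ s * (R * √L ^ τ) := by
            refine mul_le_mul_of_nonneg_left (h.trans ?_) hs
            rw [hv]; gcongr
        _ = _ := by ring
    linarith [Finset.sum_nonneg hnn]
  · have hsq : v ^ 2 = R ^ 2 * (n : ℝ) ^ τ := by
      rw [hv, mul_pow, ← pow_mul, mul_comm τ 2, pow_mul, Real.sq_sqrt (by positivity)]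
    have hnm : n ∈ Finset.Icc 1 m := by
      refine Finset.mem_Icc.2 ⟨hn1, ?_⟩
      have h1 : (n : ℝ) ≤ v ^ 2 := by
        rw [hsq]
        calc (n : ℝ) = 1 ^ 2 * (n : ℝ) ^ 1 := by ring
          _ ≤ _ := by gcongr
      have h2 : v ^ 2 ≤ t ^ 2 := by gcongr
      exact_mod_cast (h1.trans h2).trans hm
    have hsn : s ≤ Real.exp (n + 1) := by
      have := (Real.log_lt_iff_lt_exp (by positivity)).1 hLn
      linarith [Real.exp_pos 1]
    have htv : 1 ≤ t / v := (one_le_div hv0).2 h.le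
    have hvn : v ≤ R * (n : ℝ) ^ τ := by
      rw [hv]; gcongr
      exact Real.sqrt_le_iff.2 ⟨by linarith, by nlinarith⟩
    have key : s * t ≤
        Real.exp (n + 1) * R * (n : ℝ) ^ τ / (R ^ 2 * (n : ℝ) ^ τ) ^ n * t ^ (2 * n) := by
      calc s * t = s * v * (t / v) := by field_simp
        _ ≤ Real.exp (n + 1) * (R * (n : ℝ) ^ τ) * (t / v) ^ (2 * n) := by
            gcongr
            exact le_self_pow₀ htv (by omega)
        _ = _ := by
            rw [← hsq, div_pow, pow_mul v]
            ring
    have hB : 0 ≤ R * Bfun ((τ : ℝ) / 2) s := by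
      unfold Bfun
      rw [← hL, hpow]; positivity
    linarith [Finset.single_le_sum hnn hnm]

/-- The trigonometric polynomial with coefficients `c` twisted by signs and weights according to
the non-adjacent forms of the frequencies. -/
def twistedPoly (N : ℕ) (F : Finset ℤ) (c : ℤ → ℂ) (A : Finset ℕ) (x : ℝ) : ℂ :=
  ∑ z ∈ F, c z * 8 ^ nafWeight N z * (walsh A (nafSupport N z) : ℂ) * expi (-(z * x))

lemma continuous_twistedPoly (N : ℕ) (F : Finset ℤ) (c : ℤ → ℂ) (A : Finset ℕ) :
    Continuous (twistedPoly N F c A) := by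
  unfold twistedPoly
  refine continuous_finsetSum _ fun z _ => continuous_const.mul ?_
  exact continuous_expi.comp (by fun_prop)

lemma periodic_twistedPoly (N : ℕ) (F : Finset ℤ) (c : ℤ → ℂ) (A : Finset ℕ) :
    Function.Periodic (twistedPoly N F c A) 1 := by
  intro x
  refine Finset.sum_congr rfl fun z _ => ?_
  have : -((z : ℝ) * (x + 1)) = -(z * x) + ((-z : ℤ) : ℝ) := by push_cast; ring
  rw [this, expi_add, expi_intCast, mul_one]

lemma norm_twistedPoly_le (N : ℕ) (F : Finset ℤ) (c : ℤ → ℂ) (A : Finset ℕ) (x : ℝ) :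
    ‖twistedPoly N F c A x‖ ≤ ∑ z ∈ F, ‖c z‖ * 8 ^ nafWeight N z := by
  refine (norm_sum_le _ _).trans (Finset.sum_le_sum fun z _ => ?_)
  simp [norm_expi, abs_walsh]

lemma sum_twistedPoly_pow_le (τ N : ℕ) (F : Finset ℤ) (hF : ∀ z ∈ F, nafTail^[N] z = 0)
    (hw : ∀ z ∈ F, nafWeight N z ≤ τ) (c : ℤ → ℂ) (hc : ∑ z ∈ F, ‖c z‖ ^ 2 ≤ 1) (q : ℕ)
    (hq : 1 ≤ q) (x : ℝ) :
    ∑ A ∈ (Finset.range N).powerset, ‖twistedPoly N F c A x‖ ^ (2 * q) ≤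
      2 ^ N * ((256 * q : ℝ) ^ τ) ^ q := by
  set b : ℤ → ℂ := fun z => c z * 8 ^ nafWeight N z * expi (-(z * x)) with hb
  set a : Finset ℕ → ℂ := fun S => ∑ z ∈ F with nafSupport N z = S, b z with ha
  have maps : ∀ z ∈ F, nafSupport N z ∈ (Finset.range N).powerset := fun z _ =>
    Finset.mem_powerset.2 (Finset.filter_subset _ _)
  have e : ∀ A, twistedPoly N F c A x =
      ∑ S ∈ (Finset.range N).powerset, a S * (walsh A S : ℂ) := by
    intro A
    rw [twistedPoly, ← Finset.sum_fiberwise_of_maps_to maps]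
    refine Finset.sum_congr rfl fun S _ => ?_
    rw [ha, Finset.sum_mul]
    refine Finset.sum_congr rfl fun z hz => ?_
    rw [(Finset.mem_filter.1 hz).2, hb]; ring
  simp only [e]
  refine (bonami_complex q hq _ a).trans ?_
  rw [Finset.card_range]
  have hq' : (1 : ℝ) ≤ q := by exact_mod_cast hq
  refine mul_le_mul_of_nonneg_left (pow_le_pow_left₀
    (Finset.sum_nonneg fun _ _ => by positivity) ?_ q) (by positivity)
  calc ∑ S ∈ (Finset.range N).powerset, (2 * q : ℝ) ^ S.card * ‖a S‖ ^ 2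
      ≤ ∑ S ∈ (Finset.range N).powerset, ∑ z ∈ F with nafSupport N z = S,
          (256 * q : ℝ) ^ τ * ‖c z‖ ^ 2 := by
        refine Finset.sum_le_sum fun S _ => ?_
        have h1 : ‖a S‖ ^ 2 ≤ 2 ^ S.card * ∑ z ∈ F with nafSupport N z = S, ‖b z‖ ^ 2 := by
          calc ‖a S‖ ^ 2 ≤ (∑ z ∈ F with nafSupport N z = S, ‖b z‖) ^ 2 := by
                gcongr; exact norm_sum_le _ _
            _ ≤ (F.filter fun z => nafSupport N z = S).card *
                  ∑ z ∈ F with nafSupport N z = S, ‖b z‖ ^ 2 := sq_sum_le_card_mul_sum_sq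
            _ ≤ _ := by
                gcongr
                exact_mod_cast card_filter_nafSupport_le N F hF S
        calc (2 * q : ℝ) ^ S.card * ‖a S‖ ^ 2
            ≤ (2 * q : ℝ) ^ S.card *
                (2 ^ S.card * ∑ z ∈ F with nafSupport N z = S, ‖b z‖ ^ 2) := by gcongr
          _ = ∑ z ∈ F with nafSupport N z = S, (4 * q : ℝ) ^ S.card * ‖b z‖ ^ 2 := by
              rw [← mul_assoc, ← mul_pow, Finset.mul_sum]; ring_nf
          _ ≤ _ := by
              refine Finset.sum_le_sum fun z hz => ?_
              obtain ⟨hzF, hzS⟩ := Finset.mem_filter.1 hz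
              have hbz : ‖b z‖ = ‖c z‖ * 8 ^ nafWeight N z := by simp [hb, norm_expi]
              rw [hbz, ← hzS, card_nafSupport, mul_pow ‖c z‖, ← pow_mul,
                mul_comm (nafWeight N z) 2, pow_mul]
              calc (4 * q : ℝ) ^ nafWeight N z * (‖c z‖ ^ 2 * (8 ^ 2) ^ nafWeight N z)
                  = (256 * q : ℝ) ^ nafWeight N z * ‖c z‖ ^ 2 := by
                    rw [mul_left_comm, ← mul_pow]; ring_nf
                _ ≤ _ := by
                    gcongr
                    · linarith
                    · exact hw z hzF
    _ = (256 * q : ℝ) ^ τ * ∑ z ∈ F, ‖c z‖ ^ 2 := by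
        rw [Finset.sum_fiberwise_of_maps_to maps, Finset.mul_sum]
    _ ≤ _ := mul_le_of_le_one_right (by positivity) hc

lemma norm_integral_mul_le (τ : ℕ) (hτ : 1 ≤ τ) (N : ℕ) (F : Finset ℤ)
    (hF : ∀ z ∈ F, nafTail^[N] z = 0) (c : ℤ → ℂ) (R : ℝ) (hR : 1 ≤ R) (m : ℕ)
    (hm : (∑ z ∈ F, ‖c z‖ * 8 ^ nafWeight N z) ^ 2 ≤ m) (g : ℝ → ℂ)
    (hB : IntegrableOn (fun x => Bfun ((τ : ℝ) / 2) ‖g x‖) (Set.Ioc (0 : ℝ) 1))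
    (A : Finset ℕ) :
    ‖∫ x in Set.Ioc (0 : ℝ) 1, g x * ∑ z ∈ F, c z * expi (-(z * x))‖ ≤
      R * (∫ x in Set.Ioc (0 : ℝ) 1, Bfun ((τ : ℝ) / 2) ‖g x‖) +
      ∑ n ∈ Finset.Icc 1 m, Real.exp (n + 1) * R * (n : ℝ) ^ τ / (R ^ 2 * (n : ℝ) ^ τ) ^ n *
        ∫ x in Set.Ioc (0 : ℝ) 1, ‖twistedPoly N F c A x‖ ^ (2 * n) := by
  obtain ⟨φ, ⟨ι, _, p, y, hp, hsum, hφ⟩, h⟩ := exists_riesz_measure N A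
  set P := twistedPoly N F c A with hP
  have hPc : Continuous P := continuous_twistedPoly N F c A
  have rep : ∀ x, ∑ z ∈ F, c z * expi (-(z * x)) = ∑ i, (p i : ℂ) * P (x - y i) := by
    intro x
    simp only [hP, twistedPoly, Finset.mul_sum]
    rw [Finset.sum_comm]
    refine Finset.sum_congr rfl fun z hz => ?_
    calc c z * expi (-(z * x))
        = c z * (φ z * 8 ^ nafWeight N z * (walsh A (nafSupport N z) : ℂ)) * expi (-(z * x)) := by
          rw [h z (hF z hz), mul_one]
      _ = _ := by
          rw [hφ z]
          simp only [Finset.sum_mul, Finset.mul_sum]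
          refine Finset.sum_congr rfl fun i _ => ?_
          rw [show -((z : ℝ) * (x - y i)) = z * y i + -(z * x) by ring, expi_add]
          ring
  set k : ℕ → ℝ := fun n =>
    Real.exp (n + 1) * R * (n : ℝ) ^ τ / (R ^ 2 * (n : ℝ) ^ τ) ^ n with hk
  have pointwise : ∀ x, ‖g x * ∑ z ∈ F, c z * expi (-(z * x))‖ ≤
      R * Bfun ((τ : ℝ) / 2) ‖g x‖ +
        ∑ n ∈ Finset.Icc 1 m, k n * ∑ i, p i * ‖P (x - y i)‖ ^ (2 * n) := by
    intro x
    rw [rep, norm_mul]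
    calc ‖g x‖ * ‖∑ i, (p i : ℂ) * P (x - y i)‖
        ≤ ‖g x‖ * ∑ i, p i * ‖P (x - y i)‖ := by
          gcongr
          refine (norm_sum_le _ _).trans_eq (Finset.sum_congr rfl fun i _ => ?_)
          rw [norm_mul, Complex.norm_real, Real.norm_of_nonneg (hp i)]
      _ = ∑ i, p i * (‖g x‖ * ‖P (x - y i)‖) := by
          rw [Finset.mul_sum]; exact Finset.sum_congr rfl fun i _ => by ring
      _ ≤ ∑ i, p i * (R * Bfun ((τ : ℝ) / 2) ‖g x‖ +
            ∑ n ∈ Finset.Icc 1 m, k n * ‖P (x - y i)‖ ^ (2 * n)) := by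
          refine Finset.sum_le_sum fun i _ => mul_le_mul_of_nonneg_left ?_ (hp i)
          refine mul_le_bfun_add_sum τ hτ R _ _ hR (norm_nonneg _) (norm_nonneg _) m ?_
          refine (pow_le_pow_left₀ (norm_nonneg _) ?_ 2).trans hm
          exact norm_twistedPoly_le N F c A _
      _ = _ := by
          simp only [mul_add, Finset.sum_add_distrib, ← Finset.sum_mul, hsum, one_mul,
            Finset.mul_sum]
          rw [Finset.sum_comm]
          congr 1
          exact Finset.sum_congr rfl fun n _ => Finset.sum_congr rfl fun i _ => by ring
  have hint : ∀ (i : ι) (n : ℕ), IntegrableOn (fun x => ‖P (x - y i)‖ ^ (2 * n))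
      (Set.Ioc (0 : ℝ) 1) := fun i n =>
    (Continuous.integrableOn_Icc (by fun_prop)).mono_set Set.Ioc_subset_Icc_self
  have hint2 : ∀ n : ℕ, IntegrableOn (fun x => k n * ∑ i, p i * ‖P (x - y i)‖ ^ (2 * n))
      (Set.Ioc (0 : ℝ) 1) := fun n =>
    (integrable_finsetSum _ fun i _ => (hint i n).const_mul _).const_mul _
  have shift : ∀ (i : ι) (n : ℕ), ∫ x in Set.Ioc (0 : ℝ) 1, ‖P (x - y i)‖ ^ (2 * n) =
      ∫ x in Set.Ioc (0 : ℝ) 1, ‖P x‖ ^ (2 * n) := by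
    intro i n
    have hper : Function.Periodic (fun x => ‖P x‖ ^ (2 * n)) 1 := fun x => by
      simp only [periodic_twistedPoly N F c A x, hP]
    rw [← intervalIntegral.integral_of_le zero_le_one,
      ← intervalIntegral.integral_of_le zero_le_one,
      intervalIntegral.integral_comp_sub_right (fun x => ‖P x‖ ^ (2 * n)) (y i)]
    have := hper.intervalIntegral_add_eq (0 - y i) 0
    rwa [zero_add, show 0 - y i + 1 = 1 - y i by ring] at this
  refine (norm_integral_le_of_norm_le ((hB.const_mul R).add
    (integrable_finsetSum _ fun n _ => hint2 n)) (ae_of_all _ pointwise)).trans_eq ?_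
  simp only [Pi.add_apply]
  rw [integral_add (hB.const_mul R) (integrable_finsetSum _ fun n _ => hint2 n),
    integral_const_mul, integral_finsetSum _ fun n _ => hint2 n]
  congr 1
  refine Finset.sum_congr rfl fun n _ => ?_
  rw [integral_const_mul, integral_finsetSum _ fun i _ => (hint i n).const_mul _]
  simp only [integral_const_mul, shift]
  rw [← Finset.sum_mul, hsum, one_mul]

/-- The dual form of the Zygmund–Bonami inequality. -/
lemma exists_norm_integral_mul_le (τ : ℕ) (hτ : 1 ≤ τ) : ∃ C > 0, ∀ g : ℝ → ℂ,
    IntegrableOn (fun x => Bfun ((τ : ℝ) / 2) ‖g x‖) (Set.Ioc (0 : ℝ) 1) →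
    (∫ x in Set.Ioc (0 : ℝ) 1, Bfun ((τ : ℝ) / 2) ‖g x‖) ≤ 1 →
    ∀ F : Finset ℤ, (∀ z ∈ F, ∀ N, nafWeight N z ≤ τ) →
    ∀ c : ℤ → ℂ, ∑ z ∈ F, ‖c z‖ ^ 2 ≤ 1 →
      ‖∫ x in Set.Ioc (0 : ℝ) 1, g x * ∑ z ∈ F, c z * expi (-(z * x))‖ ≤ C := by
  set R : ℝ := 4 * 16 ^ τ with hR
  have hR1 : 1 ≤ R := by
    have : (1 : ℝ) ≤ 16 ^ τ := one_le_pow₀ (by norm_num)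
    linarith
  have hsummable : Summable fun n : ℕ => 3 * R * ((n : ℝ) ^ τ * (3 / 16) ^ n) :=
    (summable_pow_mul_geometric_of_norm_lt_one τ (r := (3 / 16 : ℝ)) (by norm_num)).mul_left _
  refine ⟨R + ∑' n : ℕ, 3 * R * ((n : ℝ) ^ τ * (3 / 16) ^ n),
    add_pos_of_pos_of_nonneg (by linarith) (tsum_nonneg fun n => by positivity),
    fun g hB hB1 F hw c hc => ?_⟩
  set N := F.sup Int.natAbs with hN
  have hF : ∀ z ∈ F, nafTail^[N] z = 0 := fun z hz =>
    iterate_nafTail_eq_zero N z (Finset.le_sup (f := Int.natAbs) hz)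
  obtain ⟨m, hm⟩ := exists_nat_ge ((∑ z ∈ F, ‖c z‖ * 8 ^ nafWeight N z) ^ 2)
  set X := ‖∫ x in Set.Ioc (0 : ℝ) 1, g x * ∑ z ∈ F, c z * expi (-(z * x))‖
  have hint : ∀ (A : Finset ℕ) (n : ℕ),
      IntegrableOn (fun x => ‖twistedPoly N F c A x‖ ^ (2 * n)) (Set.Ioc (0 : ℝ) 1) :=
    fun A n => (Continuous.integrableOn_Icc
      ((continuous_twistedPoly N F c A).norm.pow _)).mono_set Set.Ioc_subset_Icc_self
  have moment : ∀ n ∈ Finset.Icc 1 m, ∑ A ∈ (Finset.range N).powerset,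
      ∫ x in Set.Ioc (0 : ℝ) 1, ‖twistedPoly N F c A x‖ ^ (2 * n) ≤
      2 ^ N * ((256 * n : ℝ) ^ τ) ^ n := by
    intro n hn
    rw [← integral_finsetSum _ fun A _ => hint A n]
    calc _ ≤ ∫ x in Set.Ioc (0 : ℝ) 1, 2 ^ N * ((256 * n : ℝ) ^ τ) ^ n :=
          integral_mono (integrable_finsetSum _ fun A _ => hint A n) (integrable_const _)
            fun x => sum_twistedPoly_pow_le τ N F hF (fun z hz => hw z hz N) c hc n
              (Finset.mem_Icc.1 hn).1 x
      _ = _ := by simp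
  have avg : ∑ A ∈ (Finset.range N).powerset, X ≤
      2 ^ N * (R + ∑' n : ℕ, 3 * R * ((n : ℝ) ^ τ * (3 / 16) ^ n)) := by
    calc ∑ A ∈ (Finset.range N).powerset, X
        ≤ ∑ A ∈ (Finset.range N).powerset, (R + ∑ n ∈ Finset.Icc 1 m,
            Real.exp (n + 1) * R * (n : ℝ) ^ τ / (R ^ 2 * (n : ℝ) ^ τ) ^ n *
              ∫ x in Set.Ioc (0 : ℝ) 1, ‖twistedPoly N F c A x‖ ^ (2 * n)) := by
          refine Finset.sum_le_sum fun A _ => ?_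
          refine (norm_integral_mul_le τ hτ N F hF c R hR1 m hm g hB A).trans ?_
          gcongr
          exact mul_le_of_le_one_right (by linarith) hB1
      _ = 2 ^ N * R + ∑ n ∈ Finset.Icc 1 m,
            Real.exp (n + 1) * R * (n : ℝ) ^ τ / (R ^ 2 * (n : ℝ) ^ τ) ^ n *
              ∑ A ∈ (Finset.range N).powerset,
                ∫ x in Set.Ioc (0 : ℝ) 1, ‖twistedPoly N F c A x‖ ^ (2 * n) := by
          rw [Finset.sum_add_distrib, Finset.sum_comm]
          simp [Finset.mul_sum]
      _ ≤ 2 ^ N * R + ∑ n ∈ Finset.Icc 1 m,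
            2 ^ N * (3 * R * ((n : ℝ) ^ τ * (3 / 16) ^ n)) := by
          refine add_le_add_right (Finset.sum_le_sum fun n hn => ?_) _
          have hn1 : (1 : ℝ) ≤ n := by exact_mod_cast (Finset.mem_Icc.1 hn).1
          refine (mul_le_mul_of_nonneg_left (moment n hn) (by positivity)).trans ?_
          have e1 : R ^ 2 * (n : ℝ) ^ τ = 16 * (256 * n : ℝ) ^ τ := by
            rw [hR, mul_pow, mul_pow, ← pow_mul, mul_comm τ 2, pow_mul]; norm_num; ring
          have e2 : Real.exp (n + 1) ≤ 3 * 3 ^ n := by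
            have h3 : Real.exp 1 ≤ 3 := by linarith [Real.exp_one_lt_d9]
            rw [Real.exp_add, ← Real.exp_one_pow, mul_comm]
            gcongr
          have hpos : (0 : ℝ) < ((256 * n : ℝ) ^ τ) ^ n := by positivity
          rw [e1, mul_pow 16]
          calc Real.exp (n + 1) * R * (n : ℝ) ^ τ / (16 ^ n * ((256 * n : ℝ) ^ τ) ^ n) *
                (2 ^ N * ((256 * n : ℝ) ^ τ) ^ n)
              = 2 ^ N * (Real.exp (n + 1) * (R * (n : ℝ) ^ τ / 16 ^ n)) := by
                field_simp
            _ ≤ 2 ^ N * (3 * 3 ^ n * (R * (n : ℝ) ^ τ / 16 ^ n)) := by gcongr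
            _ = _ := by rw [div_pow]; ring
      _ ≤ _ := by
          rw [← Finset.mul_sum, ← mul_add]
          gcongr
          exact hsummable.sum_le_tsum _ fun n _ => by positivity
  rw [Finset.sum_const, Finset.card_powerset, Finset.card_range, nsmul_eq_mul] at avg
  push_cast at avg
  exact le_of_mul_le_mul_left avg (by positivity)

lemma bfun_div_le (σ : ℝ) (hσ : 0 ≤ σ) (lam : ℝ) (hlam : 0 < lam) :
    ∃ K, ∀ t, 0 ≤ t → 0 ≤ Bfun σ (t / lam) ∧ Bfun σ (t / lam) ≤ K * Bfun σ t := by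
  set c := max 1 (1 / lam) with hc
  have hc1 : 1 ≤ c := le_max_left _ _
  have hlc : 0 ≤ Real.log c := Real.log_nonneg hc1
  refine ⟨c * (1 + Real.log c) ^ σ, fun t ht => ?_⟩
  have hlog : ∀ s, 0 ≤ s → 1 ≤ Real.log (Real.exp 1 + s) := fun s hs => by
    rw [Real.le_log_iff_exp_le (by positivity)]; linarith
  have h0 := hlog (t / lam) (by positivity)
  have h1 := hlog t ht
  have htc : t / lam ≤ c * t := by
    rw [div_eq_mul_one_div, mul_comm]; gcongr; exact le_max_right _ _
  have hle : Real.log (Real.exp 1 + t / lam) ≤ (1 + Real.log c) * Real.log (Real.exp 1 + t) := by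
    calc Real.log (Real.exp 1 + t / lam) ≤ Real.log (c * (Real.exp 1 + t)) := by
          apply Real.log_le_log (by positivity)
          nlinarith [Real.exp_pos 1]
      _ = Real.log c + Real.log (Real.exp 1 + t) := Real.log_mul (by positivity) (by positivity)
      _ ≤ _ := by nlinarith
  unfold Bfun
  refine ⟨by positivity, ?_⟩
  calc t / lam * Real.log (Real.exp 1 + t / lam) ^ σ
      ≤ (c * t) * ((1 + Real.log c) * Real.log (Real.exp 1 + t)) ^ σ := by gcongr
    _ = _ := by rw [Real.mul_rpow (by positivity) (by positivity)]; ring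

lemma integrableOn_bfun_div (σ : ℝ) (hσ : 0 ≤ σ) (f : ℝ → ℂ) (s : Set ℝ) (hf : IntegrableOn f s)
    (hB : IntegrableOn (fun x => Bfun σ ‖f x‖) s) (lam : ℝ) (hlam : 0 < lam) :
    IntegrableOn (fun x => Bfun σ (‖f x‖ / lam)) s := by
  obtain ⟨K, hK⟩ := bfun_div_le σ hσ lam hlam
  refine (hB.const_mul K).mono' ?_ (ae_of_all _ fun x => ?_)
  · have hmeas : Measurable fun t : ℝ => Bfun σ (t / lam) := by unfold Bfun; fun_prop
    exact (hmeas.comp_aemeasurable hf.aestronglyMeasurable.norm.aemeasurable).aestronglyMeasurable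
  · obtain ⟨h0, h1⟩ := hK ‖f x‖ (norm_nonneg _)
    rwa [Real.norm_of_nonneg h0]

lemma sum_norm_sq_le_of_dual {ι : Type*} (F : Finset ι) (v : ι → ℂ) (C : ℝ)
    (h : ∀ c : ι → ℂ, ∑ z ∈ F, ‖c z‖ ^ 2 ≤ 1 → ‖∑ z ∈ F, c z * v z‖ ≤ C) :
    ∑ z ∈ F, ‖v z‖ ^ 2 ≤ C ^ 2 := by
  set D := ∑ z ∈ F, ‖v z‖ ^ 2 with hD
  have hD0 : 0 ≤ D := Finset.sum_nonneg fun _ _ => by positivity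
  rcases hD0.eq_or_lt with h0 | hpos
  · rw [← h0]; positivity
  have hs : 0 < √D := Real.sqrt_pos.2 hpos
  have hss : √D ^ 2 = D := Real.sq_sqrt hD0
  have key := h (fun z => starRingEnd ℂ (v z) / (√D : ℂ)) (by
    simp only [norm_div, RCLike.norm_conj, Complex.norm_real, Real.norm_of_nonneg hs.le, div_pow,
      ← Finset.sum_div, hss]
    rw [← hD, div_self hpos.ne'])
  have e : ∑ z ∈ F, starRingEnd ℂ (v z) / (√D : ℂ) * v z = ((√D : ℝ) : ℂ) := by
    have : ∀ z, starRingEnd ℂ (v z) / (√D : ℂ) * v z = ((‖v z‖ ^ 2 / √D : ℝ) : ℂ) := fun z => by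
      rw [div_mul_eq_mul_div, mul_comm, Complex.mul_conj, Complex.normSq_eq_norm_sq]
      push_cast; rfl
    simp only [this]
    rw [← Complex.ofReal_sum, ← Finset.sum_div, ← hD]
    congr 1
    rw [div_eq_iff hs.ne', ← sq, hss]
  rw [e, Complex.norm_real, Real.norm_of_nonneg hs.le] at key
  rw [← hss]
  gcongr

/-- Zygmund–Bonami inequality of order `τ`.  Let `τ ≥ 1` and
`f ∈ L log^{τ/2}L([0,1])`.  Then `(Σ_{λ ∈ lac_τ^1} |f̂(λ)|²)^{1/2} ≲_τ ‖f‖_{L log^{τ/2}L}`,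
where `f̂(λ) = ∫_{[0,1]} f(x) e^{−2πiλx} dx` and the Orlicz norm bound is expressed by a
modular condition: whenever `∫_{[0,1]} B_{τ/2}(|f|/lam) ≤ 1` the left-hand side is `≤ C·lam`. -/
theorem zygmund_bonami (τ : ℕ) (hτ : 1 ≤ τ) :
    ∃ C > 0, ∀ f : ℝ → ℂ, IntegrableOn f (Set.Ioc (0:ℝ) 1) →
      IntegrableOn (fun x => Bfun ((τ:ℝ)/2) ‖f x‖) (Set.Ioc (0:ℝ) 1) →
      ∀ lam : ℝ, 0 < lam →
      (∫ x in Set.Ioc (0:ℝ) 1, Bfun ((τ:ℝ)/2) (‖f x‖ / lam)) ≤ 1 →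
      Real.sqrt (∑' l : lacT τ 1,
        ‖∫ x in Set.Ioc (0:ℝ) 1,
            f x * Complex.exp (-Complex.I * ((2 * π * (l:ℝ) * x : ℝ) : ℂ))‖^2) ≤ C * lam := by
  obtain ⟨C, hC, hmain⟩ := exists_norm_integral_mul_le τ hτ
  refine ⟨C, hC, fun f hf hB lam hlam hmod => ?_⟩
  have hlamC : (lam : ℂ) ≠ 0 := by exact_mod_cast hlam.ne'
  have hnorm : ∀ x, ‖f x / (lam : ℂ)‖ = ‖f x‖ / lam := fun x => by
    rw [norm_div, Complex.norm_real, Real.norm_of_nonneg hlam.le]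
  have hB' := integrableOn_bfun_div _ (by positivity) f _ hf hB lam hlam
  have dual := hmain (fun x => f x / (lam : ℂ)) (by simpa only [hnorm] using hB')
    (by simpa only [hnorm] using hmod)
  have hint : ∀ z : ℤ, IntegrableOn (fun x => f x * expi (-(z * x))) (Set.Ioc (0:ℝ) 1) := by
    intro z
    refine hf.mul_bdd (c := 1) ?_ (ae_of_all _ fun x => (norm_expi _).le)
    exact (continuous_expi.comp (by fun_prop)).aestronglyMeasurable
  have hfin : ∀ F : Finset ℤ, (∀ z ∈ F, ∀ N, nafWeight N z ≤ τ) →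
      ∑ z ∈ F, ‖∫ x in Set.Ioc (0:ℝ) 1, f x * expi (-(z * x))‖ ^ 2 ≤ (C * lam) ^ 2 := by
    intro F hF
    refine sum_norm_sq_le_of_dual F _ _ fun c hc => ?_
    have e : ∑ z ∈ F, c z * ∫ x in Set.Ioc (0:ℝ) 1, f x * expi (-(z * x)) =
        lam * ∫ x in Set.Ioc (0:ℝ) 1, f x / (lam : ℂ) * ∑ z ∈ F, c z * expi (-(z * x)) := by
      simp only [← integral_const_mul]
      rw [← integral_finsetSum _ fun z _ => (hint z).const_mul _]
      congr 1 with x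
      rw [← mul_assoc, mul_div_cancel₀ _ hlamC, Finset.mul_sum]
      exact Finset.sum_congr rfl fun z _ => by ring
    rw [e, norm_mul, Complex.norm_real, Real.norm_of_nonneg hlam.le, mul_comm]
    exact mul_le_mul_of_nonneg_right (dual F hF c hc) hlam.le
  choose z hz hw using fun l : lacT τ 1 => exists_int_of_mem_lacT τ hτ l l.2
  have hinj : Function.Injective z := fun l l' h => Subtype.ext (by rw [hz, hz, h])
  have hcoef : ∀ l : lacT τ 1, (∫ x in Set.Ioc (0:ℝ) 1,
      f x * Complex.exp (-Complex.I * ((2 * π * (l:ℝ) * x : ℝ) : ℂ))) =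
      ∫ x in Set.Ioc (0:ℝ) 1, f x * expi (-(z l * x)) := by
    intro l
    congr 1 with x
    rw [expi, hz l]
    congr 2
    push_cast; ring
  refine Real.sqrt_le_iff.2 ⟨by positivity, ?_⟩
  refine Real.tsum_le_of_sum_le (fun _ => by positivity) fun s => ?_
  simp only [hcoef]
  rw [← Finset.sum_image (s := s) (g := z)
    (f := fun n : ℤ => ‖∫ x in Set.Ioc (0:ℝ) 1, f x * expi (-(n * x))‖ ^ 2) hinj.injOn]
  refine hfin _ fun n hn => ?_
  obtain ⟨l, -, rfl⟩ := Finset.mem_image.1 hn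
  exact hw l
end
end

section
/- (Dual Zygmund–Bonami) Let τ ∈ ℕ and let {a_λ}_{λ ∈ lac_τ^1} be a finitely supported collection of complex coefficients with Σ_λ |a_λ|² = 1. Then the trigonometric polynomial p(y) = Σ_{λ ∈ lac_τ^1} a_λ e^{−2πiλy} satisfies ‖p‖_{exp(L^{2/τ})([0,1])} ≲_τ 1, equivalently sup_{p' ≥ 2} (p')^{−τ/2} ‖p‖_{L^{p'}([0,1])} ≲_τ 1. -/
open MeasureTheory Real Set

noncomputable section

/-! ### A two-point inequality -/

/-- Two-point inequality in real form; it is applied with `x = ‖a‖ ^ 2`, `y = ‖b‖ ^ 2` and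
`T = 2 Re (a * conj b)`. -/
lemma rpow_add_add_rpow_sub_le {r x y T : ℝ} (hr : 1 ≤ r) (hx : 0 ≤ x) (hy : 0 ≤ y)
    (hT : T ^ 2 ≤ 4 * x * y) :
    (x + y + T) ^ r + (x + y - T) ^ r ≤ 2 * (x + 6 * r * y) ^ r := by
  have hr0 : 0 ≤ r := by linarith
  have hTS : |T| ≤ x + y := abs_le_of_sq_le_sq (by nlinarith [sq_nonneg (x - y)]) (by linarith)
  obtain ⟨hT1, hT2⟩ := abs_le.mp hTS
  have hry : y ≤ r * y := by nlinarith
  -- It is enough to bound each base by `x + 6 * r * y`.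
  have crude (h1 : x + y + T ≤ x + 6 * r * y) (h2 : x + y - T ≤ x + 6 * r * y) :
      (x + y + T) ^ r + (x + y - T) ^ r ≤ 2 * (x + 6 * r * y) ^ r := by
    have := rpow_le_rpow (by linarith) h1 hr0
    have := rpow_le_rpow (by linarith) h2 hr0
    linarith
  rcases le_or_gt (x + y) (3 * r * y) with hS | hS
  · exact crude (by linarith) (by linarith)
  have hS0 : 0 < x + y := by linarith [mul_nonneg hr0 hy]
  set t := T / (x + y) with ht
  have hTt : T = (x + y) * t := by rw [ht]; field_simp
  have hbase (u : ℝ) (hu : 0 ≤ 1 + u) :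
      ((x + y) * (1 + u)) ^ r ≤ (x + y) ^ r * Real.exp (r * u) := by
    rw [mul_rpow hS0.le hu]
    gcongr
    rw [mul_comm r u, Real.exp_mul]
    exact rpow_le_rpow hu (by linarith [Real.add_one_le_exp u]) hr0
  have hplus := hbase t (by
    have : 0 ≤ (x + y + T) / (x + y) := div_nonneg (by linarith) hS0.le
    rwa [add_div, div_self hS0.ne'] at this)
  have hminus := hbase (-t) (by
    have : 0 ≤ (x + y - T) / (x + y) := div_nonneg (by linarith) hS0.le
    rwa [sub_div, div_self hS0.ne'] at this)
  have hcosh := Real.cosh_le_exp_half_sq (r * t)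
  rw [Real.cosh_eq] at hcosh
  have hSt : (x + y) * t ^ 2 ≤ 4 * y := by
    have h1 : (x + y) * ((x + y) * t ^ 2) ≤ (x + y) * (4 * y) := by
      calc (x + y) * ((x + y) * t ^ 2) = T ^ 2 := by rw [hTt]; ring
        _ ≤ 4 * x * y := hT
        _ ≤ (x + y) * (4 * y) := by nlinarith
    exact le_of_mul_le_mul_left h1 hS0
  have hsmall : r * t ^ 2 / 2 ≤ 1 := by
    have h1 : (x + y) * (r * t ^ 2 / 2) ≤ (x + y) * 1 := by nlinarith
    exact le_of_mul_le_mul_left h1 hS0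
  have hnn : 0 ≤ r * t ^ 2 / 2 := by positivity
  have hexp : Real.exp (r * t ^ 2 / 2) ≤ 1 + r * t ^ 2 := by
    have h1 := Real.abs_exp_sub_one_le (x := r * t ^ 2 / 2) (by rwa [abs_of_nonneg hnn])
    rw [abs_of_nonneg hnn] at h1
    linarith [(abs_le.mp h1).2]
  have hfinal : (x + y) * Real.exp (r * t ^ 2 / 2) ≤ x + 6 * r * y := by
    calc (x + y) * Real.exp (r * t ^ 2 / 2) ≤ (x + y) * (1 + r * t ^ 2) := by gcongr
      _ ≤ x + 6 * r * y := by nlinarith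
  calc (x + y + T) ^ r + (x + y - T) ^ r
      = ((x + y) * (1 + t)) ^ r + ((x + y) * (1 + -t)) ^ r := by rw [hTt]; ring_nf
    _ ≤ (x + y) ^ r * Real.exp (r * t) + (x + y) ^ r * Real.exp (r * -t) := add_le_add hplus hminus
    _ = 2 * ((x + y) ^ r * ((Real.exp (r * t) + Real.exp (-(r * t))) / 2)) := by ring_nf
    _ ≤ 2 * ((x + y) ^ r * Real.exp ((r * t) ^ 2 / 2)) := by gcongr
    _ = 2 * ((x + y) * Real.exp (r * t ^ 2 / 2)) ^ r := by
      rw [mul_rpow hS0.le (Real.exp_pos _).le, ← Real.exp_mul]; ring_nf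
    _ ≤ 2 * (x + 6 * r * y) ^ r := by gcongr

lemma norm_rpow_eq_sq_rpow_half {E : Type*} [SeminormedAddCommGroup E] (z : E) (q : ℝ) :
    ‖z‖ ^ q = (‖z‖ ^ 2) ^ (q / 2) := by
  rw [← rpow_natCast, ← rpow_mul (norm_nonneg z)]
  congr 1
  push_cast
  ring

/-- Two-point inequality for complex numbers. -/
lemma norm_add_rpow_add_norm_sub_rpow_le {q : ℝ} (hq : 2 ≤ q) (a b : ℂ) :
    ‖a + b‖ ^ q + ‖a - b‖ ^ q ≤ 2 * (‖a‖ ^ 2 + 3 * q * ‖b‖ ^ 2) ^ (q / 2) := by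
  have hT : (2 * inner ℝ a b) ^ 2 ≤ 4 * ‖a‖ ^ 2 * ‖b‖ ^ 2 := by
    have h1 := sq_le_sq' (neg_le_of_abs_le (abs_real_inner_le_norm a b))
      (le_of_abs_le (abs_real_inner_le_norm a b))
    rw [mul_pow] at h1 ⊢
    linarith
  have key := rpow_add_add_rpow_sub_le (r := q / 2) (by linarith) (sq_nonneg ‖a‖)
    (sq_nonneg ‖b‖) hT
  rw [norm_rpow_eq_sq_rpow_half (a + b), norm_rpow_eq_sq_rpow_half (a - b), norm_add_sq_real,
    norm_sub_sq_real]
  convert key using 3 <;> ring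

/-! ### `L^q` norms of continuous functions on the unit interval -/

/-- The `L^q` norm on `(0, 1]`. -/
def unitLpNorm {E : Type*} [NormedAddCommGroup E] (q : ℝ) (f : ℝ → E) : ℝ :=
  (∫ y in Set.Ioc (0:ℝ) 1, ‖f y‖ ^ q) ^ (1 / q)

section unitLpNorm

variable {E : Type*} [NormedAddCommGroup E] {q : ℝ}

lemma unitLpNorm_nonneg (q : ℝ) (f : ℝ → E) : 0 ≤ unitLpNorm q f :=
  rpow_nonneg (integral_nonneg fun _ => rpow_nonneg (norm_nonneg _) _) _

lemma integrableOn_norm_rpow {f : ℝ → E} (hf : Continuous f) (hq : 0 ≤ q) :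
    IntegrableOn (fun y => ‖f y‖ ^ q) (Set.Ioc (0:ℝ) 1) :=
  (hf.norm.rpow_const fun _ => Or.inr hq).integrableOn_Ioc

lemma unitLpNorm_eq_lpNorm {f : ℝ → E} (hf : Continuous f) (hq : 0 < q) :
    unitLpNorm q f = lpNorm f (ENNReal.ofReal q) (volume.restrict (Set.Ioc (0:ℝ) 1)) := by
  rw [lpNorm_eq_integral_norm_rpow_toReal (by simpa using hq) (by simp)
    hf.aestronglyMeasurable, ENNReal.toReal_ofReal hq.le, unitLpNorm, one_div]

lemma memLp_unit_of_continuous {f : ℝ → E} (hf : Continuous f) (hq : 0 < q) :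
    MemLp f (ENNReal.ofReal q) (volume.restrict (Set.Ioc (0:ℝ) 1)) := by
  rw [← integrable_norm_rpow_iff hf.aestronglyMeasurable (by simpa using hq) (by simp),
    ENNReal.toReal_ofReal hq.le]
  exact integrableOn_norm_rpow hf hq.le

lemma unitLpNorm_add_le {f g : ℝ → E} (hq : 1 ≤ q) (hf : Continuous f) (hg : Continuous g) :
    unitLpNorm q (fun y => f y + g y) ≤ unitLpNorm q f + unitLpNorm q g := by
  have hq0 : 0 < q := by linarith
  rw [unitLpNorm_eq_lpNorm hf hq0, unitLpNorm_eq_lpNorm hg hq0,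
    unitLpNorm_eq_lpNorm (f := fun y => f y + g y) (hf.add hg) hq0]
  exact lpNorm_add_le (memLp_unit_of_continuous hf hq0) (by simpa using hq)

lemma unitLpNorm_const (hq : q ≠ 0) (c : E) : unitLpNorm q (fun _ => c) = ‖c‖ := by
  rw [unitLpNorm]
  simp only [integral_const, MeasurableSet.univ, measureReal_restrict_apply, univ_inter,
    volume_real_Ioc, sub_zero, zero_le_one, max_eq_left, one_smul]
  rw [← rpow_mul (norm_nonneg c), mul_one_div_cancel hq, rpow_one]

lemma unitLpNorm_const_mul_sq {f : ℝ → E} (hq : 0 < q) {c : ℝ} (hc : 0 ≤ c) :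
    unitLpNorm (q / 2) (fun y => c * ‖f y‖ ^ 2) = c * unitLpNorm q f ^ 2 := by
  have hI : 0 ≤ ∫ y in Set.Ioc (0:ℝ) 1, ‖f y‖ ^ q :=
    integral_nonneg fun _ => rpow_nonneg (norm_nonneg _) _
  have hpt (y : ℝ) : ‖c * ‖f y‖ ^ 2‖ ^ (q / 2) = c ^ (q / 2) * ‖f y‖ ^ q := by
    rw [Real.norm_of_nonneg (by positivity), mul_rpow hc (by positivity),
      ← norm_rpow_eq_sq_rpow_half]
  simp only [unitLpNorm, hpt]
  rw [integral_const_mul, mul_rpow (by positivity) hI, ← rpow_mul hc, ← rpow_natCast,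
    ← rpow_mul hI]
  congr 1
  · rw [mul_one_div_cancel (by positivity), rpow_one]
  · congr 1
    push_cast
    field_simp

/-- If `f + d` and `f - d` have the same `L^q` norm, the squared norm of `f + d` grows at most
additively. -/
lemma unitLpNorm_add_sq_le_of_symm {f d : ℝ → ℂ} (hq : 2 ≤ q) (hf : Continuous f)
    (hd : Continuous d)
    (hsymm : ∫ y in Set.Ioc (0:ℝ) 1, ‖f y + d y‖ ^ q = ∫ y in Set.Ioc (0:ℝ) 1, ‖f y - d y‖ ^ q) :
    unitLpNorm q (fun y => f y + d y) ^ 2 ≤ unitLpNorm q f ^ 2 + 3 * q * unitLpNorm q d ^ 2 := by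
  have hq0 : 0 < q := by linarith
  let F : ℝ → ℝ := fun y => 1 * ‖f y‖ ^ 2 + 3 * q * ‖d y‖ ^ 2
  have hF : Continuous F := by fun_prop
  have hpt (y : ℝ) : ‖f y + d y‖ ^ q + ‖f y - d y‖ ^ q ≤ 2 * ‖F y‖ ^ (q / 2) := by
    rw [Real.norm_of_nonneg (by positivity)]
    simpa only [F, one_mul] using norm_add_rpow_add_norm_sub_rpow_le hq (f y) (d y)
  have hi1 := integrableOn_norm_rpow (hf.add hd) hq0.le
  have hi2 := integrableOn_norm_rpow (hf.sub hd) hq0.le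
  have hi3 := (integrableOn_norm_rpow hF (half_pos hq0).le).const_mul 2
  have hint : ∫ y in Set.Ioc (0:ℝ) 1, ‖f y + d y‖ ^ q ≤
      ∫ y in Set.Ioc (0:ℝ) 1, ‖F y‖ ^ (q / 2) := by
    have h1 := integral_mono (hi1.add hi2) hi3 hpt
    have h2 := integral_add hi1 hi2
    simp only [Pi.add_apply, Pi.sub_apply] at h1 h2
    rw [h2, integral_const_mul] at h1
    linarith
  have hroot : unitLpNorm q (fun y => f y + d y) ^ 2 ≤ unitLpNorm (q / 2) F := by
    have hI : 0 ≤ ∫ y in Set.Ioc (0:ℝ) 1, ‖f y + d y‖ ^ q :=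
      integral_nonneg fun _ => rpow_nonneg (norm_nonneg _) _
    have h1 := rpow_le_rpow hI hint (z := 1 / (q / 2)) (by positivity)
    refine le_trans (le_of_eq ?_) h1
    rw [unitLpNorm, ← rpow_natCast, ← rpow_mul hI]
    congr 1
    push_cast
    field_simp
  refine hroot.trans ((unitLpNorm_add_le (by linarith) (by fun_prop) (by fun_prop)).trans ?_)
  rw [unitLpNorm_const_mul_sq hq0 zero_le_one, unitLpNorm_const_mul_sq hq0 (by positivity),
    one_mul]

end unitLpNorm

/-! ### Trigonometric polynomials -/

/-- The trigonometric polynomial with frequencies in `s` and coefficients `a`. -/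
def trigSum (s : Finset ℤ) (a : ℤ → ℂ) (y : ℝ) : ℂ :=
  ∑ l ∈ s, a l * Complex.exp (-Complex.I * ((2 * π * l * y : ℝ) : ℂ))

@[fun_prop]
lemma continuous_trigSum (s : Finset ℤ) (a : ℤ → ℂ) : Continuous (trigSum s a) := by
  unfold trigSum
  fun_prop

lemma trigSum_add_of_forall {s : Finset ℤ} {c : ℝ} {w : ℂ}
    (h : ∀ l ∈ s, Complex.exp (-Complex.I * ((2 * π * l * c : ℝ) : ℂ)) = w) (a : ℤ → ℂ) (y : ℝ) :
    trigSum s a (y + c) = w * trigSum s a y := by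
  rw [trigSum, trigSum, Finset.mul_sum]
  refine Finset.sum_congr rfl fun l hl => ?_
  rw [← h l hl, mul_left_comm, ← Complex.exp_add]
  push_cast
  ring_nf

lemma exp_eq_one_of_mul_eq_int {l : ℤ} {c : ℝ} (m : ℤ) (h : l * c = m) :
    Complex.exp (-Complex.I * ((2 * π * l * c : ℝ) : ℂ)) = 1 := by
  rw [Complex.exp_eq_one_iff]
  refine ⟨-m, ?_⟩
  rw [mul_assoc (2 * π), h]
  push_cast
  ring

lemma exp_eq_neg_one_of_mul_eq {l : ℤ} {c : ℝ} (m : ℤ) (h : l * c = m + 1 / 2) :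
    Complex.exp (-Complex.I * ((2 * π * l * c : ℝ) : ℂ)) = -1 := by
  have h1 : -Complex.I * ((2 * π * l * c : ℝ) : ℂ) =
      -(π * Complex.I) + (-m : ℤ) * (2 * π * Complex.I) := by
    rw [mul_assoc (2 * π), h]
    push_cast
    ring
  rw [h1, Complex.exp_add, Complex.exp_int_mul_two_pi_mul_I, Complex.exp_neg, Complex.exp_pi_mul_I]
  norm_num

lemma trigSum_periodic (s : Finset ℤ) (a : ℤ → ℂ) : Function.Periodic (trigSum s a) 1 := fun y => by
  rw [trigSum_add_of_forall (w := 1) (fun l _ => exp_eq_one_of_mul_eq_int l (mul_one _)), one_mul]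

lemma norm_trigSum_image_sub (s : Finset ℤ) (a : ℤ → ℂ) (c : ℤ) (y : ℝ) :
    ‖trigSum (s.image (· - c)) (fun l => a (l + c)) y‖ = ‖trigSum s a y‖ := by
  have h1 : trigSum s a y = Complex.exp (((-(2 * π * c * y) : ℝ) : ℂ) * Complex.I) *
      trigSum (s.image (· - c)) (fun l => a (l + c)) y := by
    rw [trigSum, trigSum, Finset.sum_image (fun x _ y _ h => by simpa using h), Finset.mul_sum]
    refine Finset.sum_congr rfl fun l _ => ?_
    rw [mul_left_comm, ← Complex.exp_add, sub_add_cancel]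
    push_cast
    ring_nf
  rw [h1, norm_mul, Complex.norm_exp_ofReal_mul_I, one_mul]

lemma trigSum_filter_add (s : Finset ℤ) (a : ℤ → ℂ) (P : ℤ → Prop) [DecidablePred P] :
    trigSum s a = fun y => trigSum (s.filter P) a y + trigSum (s.filter (¬ P ·)) a y := by
  funext y
  exact (Finset.sum_filter_add_sum_filter_not s P _).symm

/-- Translation by `2 ^ -(n + 1)` fixes frequencies divisible by `2 ^ (n + 1)` and changes the sign
of frequencies that are odd multiples of `2 ^ n`. -/
lemma integral_norm_add_eq_integral_norm_sub {n : ℕ} {s t : Finset ℤ} (a : ℤ → ℂ) (q : ℝ)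
    (hs : ∀ l ∈ s, (2:ℤ) ^ (n + 1) ∣ l)
    (ht : ∀ l ∈ t, (2:ℤ) ^ n ∣ l ∧ ¬ (2:ℤ) ^ (n + 1) ∣ l) :
    ∫ y in Set.Ioc (0:ℝ) 1, ‖trigSum s a y + trigSum t a y‖ ^ q =
      ∫ y in Set.Ioc (0:ℝ) 1, ‖trigSum s a y - trigSum t a y‖ ^ q := by
  set c : ℝ := ((2:ℝ) ^ (n + 1))⁻¹ with hc
  have hs' (y : ℝ) : trigSum s a (y + c) = trigSum s a y := by
    rw [trigSum_add_of_forall (w := 1), one_mul]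
    intro l hl
    obtain ⟨m, rfl⟩ := hs l hl
    refine exp_eq_one_of_mul_eq_int m ?_
    rw [hc]
    push_cast
    field_simp
  have ht' (y : ℝ) : trigSum t a (y + c) = -trigSum t a y := by
    rw [trigSum_add_of_forall (w := -1), neg_one_mul]
    intro l hl
    obtain ⟨⟨m, rfl⟩, hm⟩ := ht l hl
    rcases Int.even_or_odd' m with ⟨k, rfl | rfl⟩
    · exact absurd ⟨k, by ring⟩ hm
    refine exp_eq_neg_one_of_mul_eq k ?_
    rw [hc]
    push_cast
    field_simp
    ring
  let G : ℝ → ℝ := fun y => ‖trigSum s a y + trigSum t a y‖ ^ q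
  have hG : Function.Periodic G 1 := fun y => by
    simp only [G, trigSum_periodic s a y, trigSum_periodic t a y]
  have hshift : ∫ y in (0:ℝ)..1, G (y + c) = ∫ y in (0:ℝ)..1, G y := by
    rw [intervalIntegral.integral_comp_add_right, zero_add, add_comm 1 c,
      hG.intervalIntegral_add_eq c 0, zero_add]
  rw [intervalIntegral.integral_of_le zero_le_one, intervalIntegral.integral_of_le zero_le_one]
    at hshift
  rw [← show _ = ∫ y in Set.Ioc (0:ℝ) 1, ‖trigSum s a y + trigSum t a y‖ ^ q from hshift]
  simp only [G, hs', ht', sub_eq_add_neg]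

/-! ### Lacunary integers -/

/-- Sums of `τ` signed powers of two with distinct exponents. -/
def lacInt : ℕ → Set ℤ
  | 0 => {0}
  | τ + 1 => {x | ∃ n : ℕ, ∃ y ∈ lacInt τ, (2:ℤ) ^ (n + 1) ∣ y ∧ (x = y + 2 ^ n ∨ x = y - 2 ^ n)}

lemma zero_notMem_lacInt_succ (τ : ℕ) : (0:ℤ) ∉ lacInt (τ + 1) := by
  rintro ⟨n, y, -, ⟨m, rfl⟩, h⟩
  have h2 : (2:ℤ) ^ n ≠ 0 := by positivity
  rcases h with h | h
  · have h3 : (2:ℤ) ^ n * (2 * m + 1) = 0 := by rw [h]; ring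
    rcases mul_eq_zero.mp h3 with h | h
    · exact h2 h
    · omega
  · have h3 : (2:ℤ) ^ n * (2 * m - 1) = 0 := by rw [h]; ring
    rcases mul_eq_zero.mp h3 with h | h
    · exact h2 h
    · omega

/-- The lowest exponent of a lacunary integer is its `2`-adic valuation. -/
lemma sub_or_add_mem_lacInt {τ n : ℕ} {l : ℤ} (hl : l ∈ lacInt (τ + 1)) (h1 : (2:ℤ) ^ n ∣ l)
    (h2 : ¬ (2:ℤ) ^ (n + 1) ∣ l) : l - 2 ^ n ∈ lacInt τ ∨ l + 2 ^ n ∈ lacInt τ := by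
  obtain ⟨k, y, hy, hky, hl⟩ := hl
  have hdvd : (2:ℤ) ^ k ∣ l := by
    have hy' : (2:ℤ) ^ k ∣ y := (pow_dvd_pow 2 k.le_succ).trans hky
    rcases hl with rfl | rfl
    · exact hy'.add dvd_rfl
    · exact hy'.sub dvd_rfl
  have hndvd : ¬ (2:ℤ) ^ (k + 1) ∣ l := by
    intro h
    have h3 : (2:ℤ) ^ (k + 1) ∣ 2 ^ k := by
      rcases hl with rfl | rfl
      · exact (dvd_add_right hky).mp h
      · exact (dvd_sub_right hky).mp h
    have h4 := Int.le_of_dvd (by positivity) h3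
    rw [pow_succ] at h4
    have h5 : (0:ℤ) < 2 ^ k := by positivity
    linarith
  have hkn : k = n := by
    by_contra hne
    rcases lt_or_gt_of_ne hne with h | h
    · exact hndvd ((pow_dvd_pow 2 h).trans h1)
    · exact h2 ((pow_dvd_pow 2 h).trans hdvd)
  subst hkn
  rcases hl with rfl | rfl
  · left; simpa using hy
  · right; simpa using hy

/-! ### The inequality for lacunary integers -/

/-- The moment bound with constant `K` on the squared norm, for frequencies in `A`. -/
def SqNormBound (q : ℝ) (A : Set ℤ) (K : ℝ) : Prop :=
  ∀ (s : Finset ℤ) (a : ℤ → ℂ), (∀ l ∈ s, l ∈ A) →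
    unitLpNorm q (trigSum s a) ^ 2 ≤ K * ∑ l ∈ s, ‖a l‖ ^ 2

lemma SqNormBound.translate {q K : ℝ} {A : Set ℤ} (h : SqNormBound q A K) (c : ℤ) :
    SqNormBound q {l | l - c ∈ A} K := by
  intro s a hs
  have h1 := h (s.image (· - c)) (fun l => a (l + c)) (by simpa using hs)
  rw [Finset.sum_image (fun x _ y _ h => by simpa using h)] at h1
  simpa only [unitLpNorm, norm_trigSum_image_sub, sub_add_cancel] using h1

lemma SqNormBound.union {q K : ℝ} {A B : Set ℤ} (hq : 1 ≤ q) (hA : SqNormBound q A K)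
    (hB : SqNormBound q B K) : SqNormBound q (A ∪ B) (2 * K) := by
  classical
  intro s a hs
  have h1 := hA (s.filter (· ∈ A)) a (by simp)
  have h2 := hB (s.filter (¬ · ∈ A)) a (fun l hl => by
    rw [Finset.mem_filter] at hl
    exact (hs l hl.1).resolve_left hl.2)
  have h3 := unitLpNorm_add_le hq (continuous_trigSum (s.filter (· ∈ A)) a)
    (continuous_trigSum (s.filter (¬ · ∈ A)) a)
  rw [← trigSum_filter_add] at h3
  have h4 := pow_le_pow_left₀ (unitLpNorm_nonneg _ _) h3 2
  rw [← Finset.sum_filter_add_sum_filter_not s (· ∈ A)]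
  nlinarith [sq_nonneg (unitLpNorm q (trigSum (s.filter (· ∈ A)) a) -
    unitLpNorm q (trigSum (s.filter (¬ · ∈ A)) a))]

lemma SqNormBound.lacInt_succ_of_dvd {q K : ℝ} {τ : ℕ} (hq : 2 ≤ q)
    (h : SqNormBound q (lacInt τ) K) (j n : ℕ) :
    SqNormBound q {l | l ∈ lacInt (τ + 1) ∧ (2:ℤ) ^ n ∣ l ∧ ¬ (2:ℤ) ^ (n + j) ∣ l}
      (6 * q * K) := by
  classical
  induction j generalizing n with
  | zero =>
    intro s a hs
    obtain rfl : s = ∅ := Finset.eq_empty_of_forall_notMem fun l hl => (hs l hl).2.2 (hs l hl).2.1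
    have h0 : trigSum ∅ a = fun _ => 0 := by funext y; simp [trigSum]
    rw [h0, unitLpNorm_const (by linarith)]
    simp
  | succ j ih =>
    intro s a hs
    have hhigh := ih (n + 1) (s.filter ((2:ℤ) ^ (n + 1) ∣ ·)) a (fun l hl => by
      rw [Finset.mem_filter] at hl
      obtain ⟨h1, -, h3⟩ := hs l hl.1
      exact ⟨h1, hl.2, by rwa [add_right_comm, add_assoc]⟩)
    have hmem (l : ℤ) (hl : l ∈ s.filter (¬ (2:ℤ) ^ (n + 1) ∣ ·)) :
        l ∈ lacInt (τ + 1) ∧ (2:ℤ) ^ n ∣ l ∧ ¬ (2:ℤ) ^ (n + 1) ∣ l := by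
      rw [Finset.mem_filter] at hl
      exact ⟨(hs l hl.1).1, (hs l hl.1).2.1, hl.2⟩
    have hlow := ((h.translate (2 ^ n)).union (by linarith) (h.translate (-2 ^ n)))
      (s.filter (¬ (2:ℤ) ^ (n + 1) ∣ ·)) a (fun l hl => by
        obtain ⟨h1, h2, h3⟩ := hmem l hl
        simpa using sub_or_add_mem_lacInt h1 h2 h3)
    have hadd := unitLpNorm_add_sq_le_of_symm hq
      (continuous_trigSum (s.filter ((2:ℤ) ^ (n + 1) ∣ ·)) a)
      (continuous_trigSum (s.filter (¬ (2:ℤ) ^ (n + 1) ∣ ·)) a)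
      (integral_norm_add_eq_integral_norm_sub (n := n) a q
        (fun l hl => (Finset.mem_filter.mp hl).2) (fun l hl => (hmem l hl).2))
    rw [← trigSum_filter_add] at hadd
    rw [← Finset.sum_filter_add_sum_filter_not s ((2:ℤ) ^ (n + 1) ∣ ·)]
    have := mul_le_mul_of_nonneg_left hlow (show 0 ≤ 3 * q by linarith)
    linarith

lemma SqNormBound.lacInt_succ {q K : ℝ} {τ : ℕ} (hq : 2 ≤ q) (h : SqNormBound q (lacInt τ) K) :
    SqNormBound q (lacInt (τ + 1)) (6 * q * K) := by
  intro s a hs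
  refine h.lacInt_succ_of_dvd hq (∑ l ∈ s, l.natAbs) 0 s a fun l hl =>
    ⟨hs l hl, by simp, fun hdvd => ?_⟩
  have hl0 : l ≠ 0 := fun h0 => zero_notMem_lacInt_succ τ (h0 ▸ hs l hl)
  rw [← Int.natAbs_dvd_natAbs, Int.natAbs_pow, zero_add] at hdvd
  have h1 := Nat.le_of_dvd (Int.natAbs_pos.mpr hl0) hdvd
  have h2 : l.natAbs ≤ ∑ l ∈ s, l.natAbs :=
    Finset.single_le_sum (f := Int.natAbs) (fun _ _ => Nat.zero_le _) hl
  have h3 : ∑ l ∈ s, l.natAbs < (2:ℤ).natAbs ^ ∑ l ∈ s, l.natAbs := Nat.lt_two_pow_self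
  omega

lemma sqNormBound_lacInt {q : ℝ} (hq : 2 ≤ q) (τ : ℕ) :
    SqNormBound q (lacInt τ) ((6 * q) ^ τ) := by
  induction τ with
  | zero =>
    intro s a hs
    have hs' : s ⊆ {0} := fun l hl => by simpa [lacInt] using hs l hl
    have h0 : trigSum s a = fun _ => ∑ l ∈ s, a l := by
      funext y
      refine Finset.sum_congr rfl fun l hl => ?_
      simp [Finset.mem_singleton.mp (hs' hl)]
    rw [h0, unitLpNorm_const (by linarith)]
    rcases Finset.subset_singleton_iff.mp hs' with rfl | rfl <;> simp
  | succ τ ih =>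
    rw [pow_succ']
    exact ih.lacInt_succ hq

/-! ### Endpoints of Littlewood–Paley intervals -/

/-- The endpoints of intervals in `Λ_τ` of length at least one are lacunary integers, divisible by
the length of the interval. -/
lemma exists_lacInt_of_mem_Lambda (τ : ℕ) {p : ℝ × ℝ} (hp : p ∈ Lambda (τ + 1))
    (hlen : 1 ≤ p.2 - p.1) :
    ∃ (m : ℕ) (x y : ℤ), p.2 - p.1 = 2 ^ m ∧ p.1 = x ∧ p.2 = y ∧ x ∈ lacInt (τ + 1) ∧
      y ∈ lacInt (τ + 1) ∧ (2:ℤ) ^ m ∣ x ∧ (2:ℤ) ^ m ∣ y := by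
  have hnat {k : ℤ} (hk : (1:ℝ) ≤ 2 ^ k) : ∃ m : ℕ, k = m :=
    Int.eq_ofNat_of_zero_le <| by
      by_contra hneg
      exact absurd hk (not_le.mpr (zpow_lt_one_of_neg₀ one_lt_two (not_le.mp hneg)))
  induction τ generalizing p with
  | zero =>
    have hadd (n : ℕ) : (2:ℤ) ^ n ∈ lacInt 1 := ⟨n, 0, rfl, dvd_zero _, by simp⟩
    have hsub (n : ℕ) : -(2:ℤ) ^ n ∈ lacInt 1 := ⟨n, 0, rfl, dvd_zero _, by simp⟩
    obtain ⟨k, hk⟩ := hp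
    have h2 : (2:ℝ) ^ (k + 1) = 2 * 2 ^ k := by rw [zpow_add₀ two_ne_zero, zpow_one, mul_comm]
    have hk1 : (1:ℝ) ≤ 2 ^ k := by
      rcases hk with rfl | rfl <;> simp only [h2] at hlen <;> linarith
    obtain ⟨m, rfl⟩ := hnat hk1
    rw [h2, zpow_natCast] at hk
    rcases hk with rfl | rfl
    · refine ⟨m, 2 ^ m, 2 ^ (m + 1), ?_, ?_, ?_, hadd m, hadd (m + 1), dvd_rfl,
        pow_dvd_pow 2 m.le_succ⟩ <;> push_cast <;> ring
    · refine ⟨m, -2 ^ (m + 1), -2 ^ m, ?_, ?_, ?_, hsub (m + 1), hsub m,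
        (pow_dvd_pow 2 m.le_succ).neg_right, dvd_rfl.neg_right⟩ <;> push_cast <;> ring
  | succ τ ih =>
    simp only [Lambda, mem_iUnion] at hp
    obtain ⟨I, hI, ⟨k, n, hp1, hp2⟩, -, -, hmin, -⟩ := hp
    have hlen' : p.2 - p.1 = 2 ^ k := by rw [hp1, hp2]; ring
    obtain ⟨m, rfl⟩ := hnat (hlen' ▸ hlen)
    rw [zpow_natCast] at hlen'
    have hle1 : p.2 - p.1 ≤ p.1 - I.1 := hmin ▸ min_le_left _ _
    have hle2 : p.2 - p.1 ≤ I.2 - p.2 := hmin ▸ min_le_right _ _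
    obtain ⟨M, x, y, hIlen, hIx, hIy, hx, hy, hdx, hdy⟩ := ih hI (by linarith)
    have hmM : m + 2 ≤ M := by
      have h1 : (2:ℝ) ^ (m + 1) < 2 ^ M := by
        rw [← hIlen, pow_succ]
        have : (0:ℝ) < 2 ^ m := by positivity
        linarith
      exact (pow_lt_pow_iff_right₀ one_lt_two).mp h1
    have hd {z : ℤ} (hz : (2:ℤ) ^ M ∣ z) {i : ℕ} (hi : i ≤ m + 2) : (2:ℤ) ^ i ∣ z :=
      (pow_dvd_pow 2 (hi.trans hmM)).trans hz
    rcases min_choice (p.1 - I.1) (I.2 - p.2) with h | h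
    · refine ⟨m, x + 2 ^ m, x + 2 ^ (m + 1), hlen', ?_, ?_,
        ⟨m, x, hx, hd hdx (by omega), Or.inl rfl⟩, ⟨m + 1, x, hx, hd hdx (by omega), Or.inl rfl⟩,
        (hd hdx (by omega)).add dvd_rfl, (hd hdx (by omega)).add (pow_dvd_pow 2 m.le_succ)⟩
        <;> push_cast [pow_succ] <;> linarith
    · refine ⟨m, y - 2 ^ (m + 1), y - 2 ^ m, hlen', ?_, ?_,
        ⟨m + 1, y, hy, hd hdy (by omega), Or.inr rfl⟩, ⟨m, y, hy, hd hdy (by omega), Or.inr rfl⟩,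
        (hd hdy (by omega)).sub (pow_dvd_pow 2 m.le_succ), (hd hdy (by omega)).sub dvd_rfl⟩
        <;> push_cast [pow_succ] <;> linarith

lemma exists_lacInt_of_mem_lacT {τ : ℕ} (hτ : 1 ≤ τ) {l : ℝ} (hl : l ∈ lacT τ 1) :
    ∃ x ∈ lacInt τ, l = (x : ℤ) := by
  obtain ⟨τ, rfl⟩ := Nat.exists_eq_add_of_le' hτ
  rw [lacT, if_neg (by omega)] at hl
  obtain ⟨p, hp, hlen, hl⟩ := hl
  obtain ⟨m, x, y, -, hx, hy, hxm, hym, -, -⟩ := exists_lacInt_of_mem_Lambda τ hp hlen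
  rcases hl with rfl | rfl
  · exact ⟨x, hxm, hx⟩
  · exact ⟨y, hym, hy⟩

/-- Dual Zygmund–Bonami inequality.  Let `τ ≥ 1` and let `{a_λ}` be a
finitely supported collection of complex coefficients indexed by `λ ∈ lac_τ^1` with
`Σ_λ |a_λ|² = 1`.  Then the trigonometric polynomial `p(y) = Σ_λ a_λ e^{−2πiλy}` satisfies
`‖p‖_{exp(L^{2/τ})([0,1])} ≲_τ 1`, equivalently `sup_{q ≥ 2} q^{−τ/2}‖p‖_{L^q([0,1])} ≲_τ 1`. -/
theorem dual_zygmund_bonami (τ : ℕ) (hτ : 1 ≤ τ) :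
    ∃ C > 0, ∀ (s : Finset ℝ) (a : ℝ → ℂ),
      (∀ l ∈ s, l ∈ lacT τ 1) → (∑ l ∈ s, ‖a l‖^2) = 1 →
      ∀ q : ℝ, 2 ≤ q →
        q ^ (-(τ:ℝ)/2) *
          (∫ y in Set.Ioc (0:ℝ) 1,
            ‖∑ l ∈ s, a l * Complex.exp (-Complex.I * ((2 * π * l * y : ℝ) : ℂ))‖ ^ q) ^ (1/q)
          ≤ C := by
  refine ⟨(6:ℝ) ^ ((τ:ℝ) / 2), by positivity, fun s a hs ha q hq => ?_⟩
  have hfloor (l : ℝ) (hl : l ∈ s) : ⌊l⌋ ∈ lacInt τ ∧ ((⌊l⌋ : ℤ) : ℝ) = l := by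
    obtain ⟨x, hx, rfl⟩ := exists_lacInt_of_mem_lacT hτ (hs l hl)
    simpa using hx
  have hinj : Set.InjOn (fun l : ℝ => ⌊l⌋) s := fun x hx y hy h => by
    rw [← (hfloor x hx).2, ← (hfloor y hy).2]
    exact congrArg _ h
  have key := sqNormBound_lacInt hq τ (s.image fun l => ⌊l⌋) (fun x => a x) (by
    simpa using fun l hl => (hfloor l hl).1)
  have hsum : ∑ x ∈ s.image (fun l => ⌊l⌋), ‖a x‖ ^ 2 = 1 := by
    rw [Finset.sum_image hinj, ← ha]
    exact Finset.sum_congr rfl fun l hl => by rw [(hfloor l hl).2]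
  have htrig : trigSum (s.image fun l => ⌊l⌋) (fun x => a x) = fun y =>
      ∑ l ∈ s, a l * Complex.exp (-Complex.I * ((2 * π * l * y : ℝ) : ℂ)) := by
    funext y
    rw [trigSum, Finset.sum_image hinj]
    exact Finset.sum_congr rfl fun l hl => by rw [(hfloor l hl).2]
  rw [hsum, mul_one, htrig] at key
  have hq0 : 0 < q := by linarith
  have hle := Real.le_sqrt_of_sq_le key
  have hsqrt : √((6 * q) ^ τ) = 6 ^ ((τ:ℝ) / 2) * q ^ ((τ:ℝ) / 2) := by
    rw [Real.sqrt_eq_rpow, ← rpow_natCast, ← rpow_mul (by positivity),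
      mul_rpow (by norm_num) hq0.le]
    ring_nf
  rw [hsqrt] at hle
  calc q ^ (-(τ:ℝ) / 2) * _ ≤ q ^ (-(τ:ℝ) / 2) * (6 ^ ((τ:ℝ) / 2) * q ^ ((τ:ℝ) / 2)) :=
        mul_le_mul_of_nonneg_left hle (rpow_nonneg hq0.le _)
    _ = 6 ^ ((τ:ℝ) / 2) := by
      rw [mul_left_comm, ← rpow_add hq0, neg_div, neg_add_cancel, rpow_zero, mul_one]
end
end
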